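/- arXiv:2009.03609 — 5 statements merged into one kernel-verified Lean document; each statement's English description precedes it below -/
import Mathlib

section
/- If P = (p1,p2) is b-visible from Q = (q1,q2) along the curve a1(y−q2)^{b1} = a2(x−q1)^{b2}, then Q is b-visible from P along the curve a1(y−p2)^{b1} = (−1)^{b1+b2} a2(x−p1)^{b2}; in particular b-visibility is a symmetric relation. -/
/-- The point `R` lies on the curve `a1 (y - Q.2)^{b1} = a2 (x - Q.1)^{b2}`. -/
def OnCurve (b1 b2 : ℕ) (a1 a2 : ℚ) (Q R : ℤ × ℤ) : Prop :=
  a1 * ((R.2 : ℚ) - (Q.2 : ℚ)) ^ b1 = a2 * ((R.1 : ℚ) - (Q.1 : ℚ)) ^ b2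

/-- The point `R` lies in the coordinate box spanned by `P` and `Q`. -/
def BetweenPts (P Q R : ℤ × ℤ) : Prop :=
  (min P.1 Q.1 ≤ R.1 ∧ R.1 ≤ max P.1 Q.1) ∧ (min P.2 Q.2 ≤ R.2 ∧ R.2 ≤ max P.2 Q.2)

/-! The point reflection `R ↦ P + Q - R` swaps `P` and `Q` and preserves the box they span. It
negates both displacements in the curve equation, which costs the factor `(-1) ^ b1` on the left
and `(-1) ^ b2` on the right. Hence a lattice point obstructing the view from `P` to `Q` is
reflected to one obstructing the view from `Q` to `P`. -/

theorem mul_neg_pow_eq_mul_neg_pow_iff {A : Type*} [CommRing A] (m n : ℕ) (a b u v : A) :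
    a * (-u) ^ m = b * (-v) ^ n ↔ a * u ^ m = (-1) ^ (m + n) * b * v ^ n := by
  have left_eq : a * (-u) ^ m = (-1) ^ m * (a * u ^ m) := by
    rw [neg_pow u, mul_left_comm]
  have right_eq : b * (-v) ^ n = (-1) ^ m * ((-1) ^ (m + n) * b * v ^ n) := by
    have sign_sq : (-1 : A) ^ m * (-1) ^ m = 1 := by
      rw [← mul_pow, neg_one_mul, neg_neg, one_pow]
    rw [neg_pow v, pow_add]
    linear_combination (-(-1) ^ n * b * v ^ n) * sign_sq
  rw [left_eq, right_eq, (isUnit_one.neg.pow m).mul_right_inj]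

theorem onCurve_add_sub_iff (b1 b2 : ℕ) (a1 a2 : ℚ) (P Q R : ℤ × ℤ) :
    OnCurve b1 b2 a1 a2 Q (P + Q - R) ↔ OnCurve b1 b2 a1 ((-1) ^ (b1 + b2) * a2) P R := by
  have displacement (p q r : ℤ) : ((p + q - r : ℤ) : ℚ) - q = -((r : ℚ) - p) := by
    push_cast
    ring
  simp only [OnCurve, Prod.fst_sub, Prod.snd_sub, Prod.fst_add, Prod.snd_add, displacement,
    mul_neg_pow_eq_mul_neg_pow_iff]

theorem betweenPts_add_sub_iff (P Q R : ℤ × ℤ) :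
    BetweenPts P Q (P + Q - R) ↔ BetweenPts Q P R := by
  simp only [BetweenPts, Prod.fst_sub, Prod.snd_sub, Prod.fst_add, Prod.snd_add]
  omega

/-- If `P` is b-visible from `Q` along the curve `a1 (y-q2)^{b1} = a2 (x-q1)^{b2}`, then `Q`
is b-visible from `P` along the curve `a1 (y-p2)^{b1} = (-1)^{b1+b2} a2 (x-p1)^{b2}`. -/
theorem stmt_5 (b1 b2 : ℕ) (hb1 : 0 < b1) (hb2 : 0 < b2) (P Q : ℤ × ℤ) (a1 a2 : ℚ)
    (ha : (a1, a2) ≠ (0, 0)) (hPQ : OnCurve b1 b2 a1 a2 Q P)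
    (hvis : ∀ R : ℤ × ℤ, OnCurve b1 b2 a1 a2 Q R → BetweenPts P Q R → R = P ∨ R = Q) :
    (a1, (-1 : ℚ) ^ (b1 + b2) * a2) ≠ (0, 0) ∧
      OnCurve b1 b2 a1 ((-1 : ℚ) ^ (b1 + b2) * a2) P Q ∧
      ∀ R : ℤ × ℤ, OnCurve b1 b2 a1 ((-1 : ℚ) ^ (b1 + b2) * a2) P R →
        BetweenPts Q P R → R = Q ∨ R = P := by
  refine ⟨by simpa using ha, ?_, fun R hR hRbox => ?_⟩
  · rw [← onCurve_add_sub_iff, add_sub_cancel_right]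
    exact hPQ
  · have reflected_endpoint : P + Q - R = P ∨ P + Q - R = Q :=
      hvis _ ((onCurve_add_sub_iff ..).2 hR) ((betweenPts_add_sub_iff ..).2 hRbox)
    refine reflected_endpoint.imp (fun hP => ?_) (fun hQ => ?_)
    · rw [← sub_sub_cancel (P + Q) R, hP, add_sub_cancel_left]
    · rw [← sub_sub_cancel (P + Q) R, hQ, add_sub_cancel_right]
end

section
/- Let J ≥ 1 and let s = (s_1,...,s_J) be integers, and suppose b1 ≤ b2 and J < 2^{b1+b2}. Define f_{b,s}(n) = Σ μ(d_1)···μ(d_J)/(d_1···d_J)^{b2}, the sum over tuples (d_1,...,d_J) of positive integers with d_j^{b1} | n − s_j for all j and gcd(d_{j1}, d_{j2}) = 1 for all j1 ≠ j2. Then for x ≥ 2, Σ_{n ≤ x} f_{b,s}(n) = x·Π_p (1 − J·p^{−(b1+b2)}) + O((log x)^J), with implied constant depending on b and s. -/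
open Finset Real
open scoped Classical

/-- `f_{b,s}(n) = ∑ μ(d_1)⋯μ(d_J)/(d_1⋯d_J)^{b2}`, summed over tuples of pairwise coprime
positive integers `d_j` with `d_j^{b1} ∣ n - s_j` for all `j`. -/
noncomputable def fbs (b1 b2 J : ℕ) (s : Fin J → ℤ) (n : ℤ) : ℝ :=
  ∑' d : Fin J → ℕ,
    if (∀ j, 0 < d j ∧ ((d j : ℤ)) ^ b1 ∣ n - s j) ∧
        (∀ j1 j2, j1 ≠ j2 → Nat.Coprime (d j1) (d j2)) then
      (∏ j, (ArithmeticFunction.moebius (d j) : ℝ)) / (∏ j, (d j : ℝ)) ^ b2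
    else 0

/-!
The summand of `fbs` at a tuple `d` is `μ(m) / m ^ b2` with `m = ∏ j, d j`, since `μ(m) ≠ 0` already
forces the entries to be positive and pairwise coprime. Let `Y` be the integer part of the `b1`-th
root of `⌊x⌋ + ∑ j, |s j|`. A tuple with an entry exceeding `Y` contributes to no `n ≤ x` except the
finitely many `n = s j`. For the remaining tuples we exchange the sums over `n` and `d`: by the
Chinese remainder theorem `x / m ^ b1 + O(1)` of the `n ≤ x` satisfy all divisibility conditions,
and the total error is at most a multiple of `(∑ d ≤ Y, 1 / d) ^ J`, hence `O((log x) ^ J)`.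
Completing the main term `x * ∑ μ(m) / m ^ (b1 + b2)` to all tuples costs
`O(x / Y ^ (b1 + b2 - 1))`, which is bounded. A squarefree `m` is the product of `J ^ ω(m)` tuples,
so the completed sum is `∑ m, J ^ ω(m) * μ(m) / m ^ (b1 + b2)`, whose Euler factors are
`1 - J / p ^ (b1 + b2)`.
-/

open Filter Function
open scoped Topology ArithmeticFunction.Moebius ArithmeticFunction.omega

section InfiniteSums

variable {α ι : Type*} [Fintype ι]

theorem hasSum_pi_prod_of_nonneg {w : ι → α → ℝ} (hw0 : ∀ i a, 0 ≤ w i a)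
    (hw : ∀ i, Summable (w i)) :
    HasSum (fun d : ι → α ↦ ∏ i, w i (d i)) (∏ i, ∑' a, w i a) := by
  have hcofinal : Tendsto (fun t : Finset α ↦ Fintype.piFinset fun _ : ι ↦ t) atTop atTop :=
    tendsto_atTop_finset_of_monotone
      (fun t t' h ↦ Fintype.piFinset_subset _ _ fun _ ↦ h) fun d ↦ ⟨univ.image d, by simp⟩
  have hsummable : Summable fun d : ι → α ↦ ∏ i, w i (d i) := by
    refine summable_of_sum_le (c := ∏ i, ∑' a, w i a)
      (fun d ↦ prod_nonneg fun i _ ↦ hw0 i (d i)) fun u ↦ ?_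
    obtain ⟨t, hut⟩ := (hcofinal.eventually_ge_atTop u).exists
    calc ∑ d ∈ u, ∏ i, w i (d i)
        ≤ ∑ d ∈ Fintype.piFinset fun _ ↦ t, ∏ i, w i (d i) :=
          sum_le_sum_of_subset_of_nonneg hut fun d _ _ ↦ prod_nonneg fun i _ ↦ hw0 i (d i)
      _ = ∏ i, ∑ a ∈ t, w i a := sum_prod_piFinset t w
      _ ≤ ∏ i, ∑' a, w i a :=
          prod_le_prod (fun i _ ↦ sum_nonneg fun a _ ↦ hw0 i a)
            fun i _ ↦ (hw i).sum_le_tsum t fun a _ ↦ hw0 i a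
  have hprod : Tendsto (fun t ↦ ∑ d ∈ Fintype.piFinset fun _ : ι ↦ t, ∏ i, w i (d i)) atTop
      (𝓝 (∏ i, ∑' a, w i a)) := by
    simp only [sum_prod_piFinset]
    exact tendsto_finsetProd _ fun i _ ↦ (hw i).hasSum
  exact tendsto_nhds_unique (hsummable.hasSum.comp hcofinal) hprod ▸ hsummable.hasSum

theorem tsum_pi_prod_sub_sum_piFinset_le [DecidableEq ι] {w : α → ℝ} (hw0 : ∀ a, 0 ≤ w a)
    (hw : Summable w) (t : Finset α) :
    ∑' d : ι → α, ∏ i, w (d i) - ∑ d ∈ Fintype.piFinset fun _ : ι ↦ t, ∏ i, w (d i) ≤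
      (∑' a, w a - ∑ a ∈ t, w a) * Fintype.card ι * (∑' a, w a) ^ (Fintype.card ι - 1) := by
  have hle : ∑ a ∈ t, w a ≤ ∑' a, w a := hw.sum_le_tsum t fun a _ ↦ hw0 a
  have h0 : 0 ≤ ∑ a ∈ t, w a := sum_nonneg fun a _ ↦ hw0 a
  rw [(hasSum_pi_prod_of_nonneg (fun _ : ι ↦ hw0) fun _ ↦ hw).tsum_eq,
    sum_prod_piFinset t fun _ ↦ w, prod_const, prod_const, card_univ]
  refine (le_abs_self _).trans ((abs_pow_sub_pow_le _ _ _).trans_eq ?_)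
  rw [abs_of_nonneg (sub_nonneg.2 hle), abs_of_nonneg h0, abs_of_nonneg (h0.trans hle),
    max_eq_left hle]

theorem norm_tsum_sub_sum_le {E : Type*} [NormedAddCommGroup E] [CompleteSpace E]
    {f : α → E} {g : α → ℝ} (hg : Summable g) (hfg : ∀ a, ‖f a‖ ≤ g a) (t : Finset α) :
    ‖∑' a, f a - ∑ a ∈ t, f a‖ ≤ ∑' a, g a - ∑ a ∈ t, g a := by
  rw [← (Summable.of_norm_bounded hg hfg).sum_add_tsum_subtype_compl t,
    ← hg.sum_add_tsum_subtype_compl t, add_sub_cancel_left, add_sub_cancel_left]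
  exact tsum_of_norm_bounded (hg.subtype _).hasSum fun a ↦ hfg a

theorem tsum_one_div_pow_sub_sum_range_le {k : ℕ} (hk : 2 ≤ k) (Y : ℕ) :
    ∑' d : ℕ, 1 / (d : ℝ) ^ k - ∑ d ∈ range (Y + 1), 1 / (d : ℝ) ^ k ≤
      2 / ((Y : ℝ) + 1) ^ (k - 1) := by
  obtain ⟨m, rfl⟩ := Nat.exists_eq_add_of_le' hk
  rw [← (Real.summable_one_div_nat_pow.2 hk).sum_add_tsum_nat_add (Y + 1), add_sub_cancel_left]
  refine Real.tsum_le_of_sum_range_le (fun _ ↦ by positivity) fun M ↦ ?_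
  have hterm (i : ℕ) : 1 / ((i + (Y + 1) : ℕ) : ℝ) ^ (m + 2) ≤
      1 / ((Y : ℝ) + 1) ^ m * (((Y + 1 + i : ℕ) : ℝ) ^ 2)⁻¹ := by
    rw [pow_add, ← one_div, ← one_div_mul_one_div, add_comm i]
    gcongr
    push_cast
    linarith [Nat.cast_nonneg (α := ℝ) i]
  calc ∑ i ∈ range M, 1 / ((i + (Y + 1) : ℕ) : ℝ) ^ (m + 2)
      ≤ 1 / ((Y : ℝ) + 1) ^ m * ∑ i ∈ range M, (((Y + 1 + i : ℕ) : ℝ) ^ 2)⁻¹ := by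
        rw [mul_sum]
        exact sum_le_sum fun i _ ↦ hterm i
    _ = 1 / ((Y : ℝ) + 1) ^ m * ∑ d ∈ Ioo Y (Y + 1 + M), ((d : ℝ) ^ 2)⁻¹ := by
        rw [← Ico_add_one_left_eq_Ioo, sum_Ico_eq_sum_range, Nat.add_sub_cancel_left]
    _ ≤ 1 / ((Y : ℝ) + 1) ^ m * (2 / ((Y : ℝ) + 1)) := by
        gcongr
        exact sum_Ioo_inv_sq_le Y _
    _ = 2 / ((Y : ℝ) + 1) ^ (m + 2 - 1) := by
        rw [div_mul_div_comm, one_mul, ← pow_succ]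
        rfl

end InfiniteSums

section SquarefreeSupport

theorem hasProd_one_add_of_squarefree_support {R : Type*} [NormedCommRing R] [CompleteSpace R]
    {f : ℕ → R} (hf1 : f 1 = 1) (hmul : ∀ {m n : ℕ}, m.Coprime n → f (m * n) = f m * f n)
    (hf : ∀ n, ¬Squarefree n → f n = 0) (hsum : Summable (‖f ·‖)) :
    HasProd (fun p : Nat.Primes ↦ 1 + f p) (∑' n, f n) := by
  convert EulerProduct.eulerProduct_hasProd hf1 hmul hsum (hf 0 not_squarefree_zero) with p
  have hpow : ∀ e ∉ range 2, f ((p : ℕ) ^ e) = 0 := fun e he ↦ hf _ fun hsq ↦ by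
    have := hsq.eq_zero_or_one_of_pow_of_not_isUnit p.2.not_isUnit
    simp only [mem_range] at he
    omega
  rw [tsum_eq_sum hpow, sum_range_succ, sum_range_one, pow_zero, pow_one, hf1]

variable {J : ℕ} {f : ℕ → ℝ}

theorem tsum_fiber_prod_eq (hf : ∀ m, ¬Squarefree m → f m = 0) (m : ℕ) :
    ∑' d : (fun d : Fin J → ℕ ↦ ∏ j, d j) ⁻¹' {m}, f (∏ j, d.1 j) = (J : ℝ) ^ ω m * f m := by
  have hconst (d : (fun d : Fin J → ℕ ↦ ∏ j, d j) ⁻¹' {m}) : f (∏ j, d.1 j) = f m :=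
    congrArg f d.2
  simp only [hconst]
  by_cases hm : Squarefree m
  · have hfiber : ((fun d : Fin J → ℕ ↦ ∏ j, d j) ⁻¹' {m}) = Nat.finMulAntidiag J m := by
      ext d
      simp [Nat.mem_finMulAntidiag, hm.ne_zero]
    rw [hfiber, Finset.tsum_subtype' _ fun _ ↦ f m, sum_const,
      Nat.card_finMulAntidiag_of_squarefree hm, nsmul_eq_mul, Nat.cast_pow]
  · rw [hf m hm, mul_zero, tsum_zero]

theorem hasSum_pow_cardDistinctFactors_mul (hf : ∀ m, ¬Squarefree m → f m = 0)
    (hsum : Summable fun d : Fin J → ℕ ↦ f (∏ j, d j)) :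
    HasSum (fun m ↦ (J : ℝ) ^ ω m * f m) (∑' d : Fin J → ℕ, f (∏ j, d j)) := by
  simpa only [tsum_fiber_prod_eq hf] using
    hsum.hasSum.tsum_fiberwise fun d : Fin J → ℕ ↦ ∏ j, d j

end SquarefreeSupport

section Counting

theorem abs_card_Ioc_filter_modEq_sub_le {a b : ℕ} (hab : a ≤ b) {q : ℕ} (hq : 0 < q) (v : ℕ) :
    |(#{n ∈ Ioc a b | n ≡ v [MOD q]} : ℝ) - (b - a) / q| ≤ 1 := by
  have hfloor : ⌊((a : ℚ) - v) / q⌋ ≤ ⌊((b : ℚ) - v) / q⌋ := by gcongr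
  have hcard : (#{n ∈ Ioc a b | n ≡ v [MOD q]} : ℚ) =
      ⌊((b : ℚ) - v) / q⌋ - ⌊((a : ℚ) - v) / q⌋ := by
    have := Nat.Ioc_filter_modEq_card a b hq v
    rw [max_eq_left (sub_nonneg.2 hfloor)] at this
    exact_mod_cast this
  have hdiv : ((b : ℚ) - a) / q = (b - v) / q - (a - v) / q := by ring
  have : |(#{n ∈ Ioc a b | n ≡ v [MOD q]} : ℚ) - (b - a) / q| ≤ 1 := by
    rw [hcard, hdiv, abs_le]
    constructor <;>
      linarith [Int.floor_le (((b : ℚ) - v) / q), Int.lt_floor_add_one (((b : ℚ) - v) / q),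
        Int.floor_le (((a : ℚ) - v) / q), Int.lt_floor_add_one (((a : ℚ) - v) / q)]
  rify at this
  exact this

variable {ι : Type*} [Fintype ι] {q : ι → ℕ}

theorem exists_forall_dvd_sub_iff_modEq (hq : ∀ j, q j ≠ 0) (hcop : Pairwise (Nat.Coprime on q))
    (s : ι → ℤ) :
    ∃ v : ℕ, ∀ n : ℕ, (∀ j, (q j : ℤ) ∣ n - s j) ↔ n ≡ v [MOD ∏ j, q j] := by
  have : NeZero (∏ j, q j) := ⟨prod_ne_zero_iff.2 fun j _ ↦ hq j⟩
  obtain ⟨v, hv⟩ :=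
    ZMod.natCast_zmod_surjective ((ZMod.prodEquivPi q hcop).symm fun j ↦ (s j : ZMod (q j)))
  refine ⟨v, fun n ↦ ?_⟩
  rw [← ZMod.natCast_eq_natCast_iff, hv, RingEquiv.eq_symm_apply, map_natCast, funext_iff]
  refine forall_congr' fun j ↦ ?_
  rw [← ZMod.intCast_zmod_eq_zero_iff_dvd, Int.cast_sub, sub_eq_zero, Int.cast_natCast,
    Pi.natCast_apply]

theorem abs_card_filter_forall_dvd_sub_le (hq : ∀ j, q j ≠ 0) (hcop : Pairwise (Nat.Coprime on q))
    (s : ι → ℤ) {x : ℝ} (hx : 0 ≤ x) :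
    |(#((Icc 1 ⌊x⌋₊).filter fun n : ℕ ↦ ∀ j, (q j : ℤ) ∣ n - s j) : ℝ) -
      x / ((∏ j, q j : ℕ) : ℝ)| ≤ 2 := by
  obtain ⟨v, hv⟩ := exists_forall_dvd_sub_iff_modEq hq hcop s
  have hQ : 0 < ∏ j, q j := prod_pos fun j _ ↦ Nat.pos_of_ne_zero (hq j)
  have hQ1 : (1 : ℝ) ≤ (∏ j, q j : ℕ) := Nat.one_le_cast.2 hQ
  rw [filter_congr fun n _ ↦ hv n,
    show Icc 1 ⌊x⌋₊ = Ioc 0 ⌊x⌋₊ from Icc_add_one_left_eq_Ioc 0 _]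
  have hcount := abs_card_Ioc_filter_modEq_sub_le (Nat.zero_le ⌊x⌋₊) hQ v
  rw [Nat.cast_zero, sub_zero] at hcount
  have hround : |(⌊x⌋₊ : ℝ) / (∏ j, q j : ℕ) - x / (∏ j, q j : ℕ)| ≤ 1 := by
    rw [← sub_div, abs_div, Nat.abs_cast, div_le_one (by positivity)]
    refine le_trans ?_ hQ1
    rw [abs_le]
    constructor <;> linarith [Nat.floor_le hx, Nat.lt_floor_add_one x]
  exact (abs_sub_le _ _ _).trans ((add_le_add hcount hround).trans_eq one_add_one_eq_two)

end Counting

section MoebiusWeights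

/-- The weight `μ(m) / m ^ k`. For `k = b2` and `m` the product of a tuple it is the summand
of `fbs`. It vanishes at `m = 0` because `μ(0) = 0`. -/
noncomputable def moebiusDivPow (k m : ℕ) : ℝ := μ m / (m : ℝ) ^ k

variable {ι : Type*} [Fintype ι] {k m : ℕ}

theorem moebiusDivPow_eq_zero_of_not_squarefree (hm : ¬Squarefree m) : moebiusDivPow k m = 0 := by
  rw [moebiusDivPow, ArithmeticFunction.moebius_eq_zero_of_not_squarefree hm, Int.cast_zero,
    zero_div]

theorem mul_moebiusDivPow_add (x : ℝ) (a k m : ℕ) :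
    x * moebiusDivPow (a + k) m = moebiusDivPow k m * (x / (m : ℝ) ^ a) := by
  rw [moebiusDivPow, moebiusDivPow, pow_add]
  ring

theorem abs_moebiusDivPow_prod_le (k : ℕ) (d : ι → ℕ) :
    |moebiusDivPow k (∏ j, d j)| ≤ ∏ j, 1 / (d j : ℝ) ^ k := by
  have hmoebius : |(μ (∏ j, d j) : ℝ)| ≤ 1 := mod_cast ArithmeticFunction.abs_moebius_le_one
  rw [moebiusDivPow, abs_div, abs_pow, Nat.abs_cast, prod_div_distrib, prod_const_one, prod_pow,
    Nat.cast_prod]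
  gcongr

theorem summable_one_div_pow_prod (hk : 2 ≤ k) :
    Summable fun d : ι → ℕ ↦ ∏ j, 1 / (d j : ℝ) ^ k :=
  (hasSum_pi_prod_of_nonneg (fun _ _ ↦ by positivity)
    fun _ ↦ Real.summable_one_div_nat_pow.2 hk).summable

theorem summable_abs_moebiusDivPow_prod (hk : 2 ≤ k) :
    Summable fun d : ι → ℕ ↦ |moebiusDivPow k (∏ j, d j)| :=
  .of_nonneg_of_le (fun _ ↦ abs_nonneg _) (abs_moebiusDivPow_prod_le k)
    (summable_one_div_pow_prod hk)

theorem tsum_moebiusDivPow_prod_eq_tprod (J : ℕ) (hk : 2 ≤ k) :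
    ∑' d : Fin J → ℕ, moebiusDivPow k (∏ j, d j) =
      ∏' p : Nat.Primes, (1 - (J : ℝ) / (p : ℝ) ^ k) := by
  let f : ℕ → ℝ := fun m ↦ (J : ℝ) ^ ω m * moebiusDivPow k m
  have hvanish (m : ℕ) (hm : ¬Squarefree m) : moebiusDivPow k m = 0 :=
    moebiusDivPow_eq_zero_of_not_squarefree hm
  have hsum := summable_abs_moebiusDivPow_prod (ι := Fin J) hk
  have hf : HasSum f (∑' d : Fin J → ℕ, moebiusDivPow k (∏ j, d j)) :=
    hasSum_pow_cardDistinctFactors_mul hvanish hsum.of_abs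
  have hnorm : Summable (‖f ·‖) := by
    simpa [f, abs_mul] using (hasSum_pow_cardDistinctFactors_mul (J := J)
      (f := fun m ↦ |moebiusDivPow k m|) (fun m hm ↦ by rw [hvanish m hm, abs_zero])
      hsum).summable
  have hmul {m n : ℕ} (hmn : m.Coprime n) : f (m * n) = f m * f n := by
    simp only [f, moebiusDivPow, ArithmeticFunction.cardDistinctFactors_mul hmn,
      ArithmeticFunction.isMultiplicative_moebius.map_mul_of_coprime hmn]
    push_cast
    ring
  have hprime (p : Nat.Primes) : 1 + f p = 1 - (J : ℝ) / (p : ℝ) ^ k := by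
    simp only [f, moebiusDivPow, ArithmeticFunction.cardDistinctFactors_apply_prime p.2,
      ArithmeticFunction.moebius_apply_prime p.2]
    push_cast
    ring
  rw [← hf.tsum_eq, ← (hasProd_one_add_of_squarefree_support (by simp [f, moebiusDivPow]) hmul
    (fun m hm ↦ by simp only [f, hvanish m hm, mul_zero]) hnorm).tprod_eq, tprod_congr hprime]

theorem pairwise_coprime_of_squarefree_prod {d : ι → ℕ} (hd : Squarefree (∏ j, d j)) :
    Pairwise (Nat.Coprime on d) := fun i j hij ↦ by
  refine Nat.coprime_of_squarefree_mul (hd.squarefree_of_dvd ?_)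
  rw [← prod_pair hij]
  exact prod_dvd_prod_of_subset _ _ _ (subset_univ _)

theorem moebius_prod_eq_ite (d : ι → ℕ) :
    μ (∏ j, d j) =
      if (∀ j, 0 < d j) ∧ Pairwise (Nat.Coprime on d) then ∏ j, μ (d j) else 0 := by
  split_ifs with h
  · exact ArithmeticFunction.isMultiplicative_moebius.map_prod d univ fun i _ j _ hij ↦ h.2 hij
  · refine ArithmeticFunction.moebius_eq_zero_of_not_squarefree fun hsq ↦ h ⟨fun j ↦ ?_, ?_⟩
    · exact Nat.pos_of_ne_zero (prod_ne_zero_iff.1 hsq.ne_zero j (mem_univ j))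
    · exact pairwise_coprime_of_squarefree_prod hsq

/-- The summand of `fbs` at the tuple `d`, with positivity and coprimality of the entries expressed
through the vanishing of `μ (∏ j, d j)`. -/
noncomputable def fbsSummand (b1 b2 : ℕ) (s : ι → ℤ) (n : ℤ) (d : ι → ℕ) : ℝ :=
  if ∀ j, (d j : ℤ) ^ b1 ∣ n - s j then moebiusDivPow b2 (∏ j, d j) else 0

theorem fbs_eq_tsum (b1 b2 J : ℕ) (s : Fin J → ℤ) (n : ℤ) :
    fbs b1 b2 J s n = ∑' d, fbsSummand b1 b2 s n d := by
  refine tsum_congr fun d ↦ ?_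
  rw [fbsSummand]
  by_cases hdvd : ∀ j, (d j : ℤ) ^ b1 ∣ n - s j
  · rw [if_pos hdvd, moebiusDivPow, moebius_prod_eq_ite, Nat.cast_prod]
    have hiff : ((∀ j, 0 < d j ∧ (d j : ℤ) ^ b1 ∣ n - s j) ∧
        ∀ j1 j2, j1 ≠ j2 → Nat.Coprime (d j1) (d j2)) ↔
        (∀ j, 0 < d j) ∧ Pairwise (Nat.Coprime on d) :=
      and_congr (forall_congr' fun j ↦ and_iff_left (hdvd j)) Iff.rfl
    simp only [hiff]
    split_ifs
    · rw [Int.cast_prod]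
    · rw [Int.cast_zero, zero_div]
  · rw [if_neg hdvd, if_neg fun h ↦ hdvd fun j ↦ (h.1 j).2]

end MoebiusWeights

section Truncation

/-- The tuples with all entries at most `Y`, used to truncate the sum defining `fbs`. Zero entries
are allowed, as they contribute `moebiusDivPow k 0 = 0`. -/
abbrev boundedTuples (ι : Type*) [Fintype ι] [DecidableEq ι] (Y : ℕ) : Finset (ι → ℕ) :=
  Fintype.piFinset fun _ ↦ range (Y + 1)

/-- The contribution to `fbs` of the tuples whose entries are at most `Y`. -/
noncomputable def fbsTrunc {ι : Type*} [Fintype ι] [DecidableEq ι] (b1 b2 Y : ℕ) (s : ι → ℤ)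
    (n : ℤ) : ℝ :=
  ∑ d ∈ boundedTuples ι Y, fbsSummand b1 b2 s n d

variable {ι : Type*} [Fintype ι] [DecidableEq ι] {b1 b2 J Y : ℕ}

theorem sum_range_one_div_pow_le {k : ℕ} (hk : k ≠ 0) (Y : ℕ) :
    ∑ d ∈ range (Y + 1), 1 / (d : ℝ) ^ k ≤ 1 + log Y := by
  rw [sum_range_succ', Nat.cast_zero, zero_pow hk, div_zero, add_zero]
  refine le_trans (sum_le_sum fun i _ ↦ ?_)
    ((Rat.cast_sum (α := ℝ) ..).symm.trans_le (harmonic_le_one_add_log Y))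
  push_cast
  rw [← one_div]
  gcongr
  exact le_self_pow₀ (by linarith [Nat.cast_nonneg (α := ℝ) i]) hk

theorem sum_abs_moebiusDivPow_prod_le {k : ℕ} (hk : k ≠ 0) (Y : ℕ) :
    ∑ d ∈ boundedTuples ι Y, |moebiusDivPow k (∏ j, d j)| ≤ (1 + log Y) ^ Fintype.card ι :=
  calc ∑ d ∈ boundedTuples ι Y, |moebiusDivPow k (∏ j, d j)|
      ≤ ∑ d ∈ boundedTuples ι Y, ∏ j, 1 / (d j : ℝ) ^ k :=
        sum_le_sum fun d _ ↦ abs_moebiusDivPow_prod_le k d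
    _ = (∑ d ∈ range (Y + 1), 1 / (d : ℝ) ^ k) ^ Fintype.card ι := by
        rw [sum_prod_piFinset _ fun (_ : ι) (d : ℕ) ↦ 1 / (d : ℝ) ^ k, prod_const, card_univ]
    _ ≤ (1 + log Y) ^ Fintype.card ι := by
        gcongr
        exact sum_range_one_div_pow_le hk Y

theorem abs_fbsTrunc_le (hb2 : b2 ≠ 0) (s : ι → ℤ) (n : ℤ) :
    |fbsTrunc b1 b2 Y s n| ≤ (1 + log Y) ^ Fintype.card ι := by
  refine (abs_sum_le_sum_abs _ _).trans
    ((sum_le_sum fun d _ ↦ ?_).trans (sum_abs_moebiusDivPow_prod_le hb2 Y))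
  rw [fbsSummand]
  split_ifs
  · exact le_rfl
  · rw [abs_zero]
    exact abs_nonneg _

theorem fbs_eq_fbsTrunc {s : Fin J → ℤ} {n : ℤ} (hn : ∀ j, n ≠ s j)
    (hY : ∀ j, (n - s j).natAbs < (Y + 1) ^ b1) : fbs b1 b2 J s n = fbsTrunc b1 b2 Y s n := by
  rw [fbs_eq_tsum, fbsTrunc]
  refine tsum_eq_sum fun d hd ↦ ?_
  refine if_neg fun hdvd ↦ hd (Fintype.mem_piFinset.2 fun j ↦ ?_)
  have hpow : d j ^ b1 ≤ (n - s j).natAbs := by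
    refine Nat.le_of_dvd (Int.natAbs_pos.2 (sub_ne_zero.2 (hn j))) ?_
    simpa [Int.natAbs_pow] using Int.natAbs_dvd_natAbs.2 (hdvd j)
  exact mem_range.2 (lt_of_pow_lt_pow_left₀ b1 (Nat.zero_le _) (hpow.trans_lt (hY j)))

/-- The natural numbers equal to some `s j`: only there can `fbs` receive contributions from
arbitrarily large tuples. A negative `s j` is recorded as `0`, which only enlarges the set. -/
def exceptionalSet {ι : Type*} [Fintype ι] (s : ι → ℤ) : Finset ℕ :=
  univ.image fun j ↦ (s j).toNat

theorem abs_sum_fbs_sub_sum_fbsTrunc_le (hb2 : b2 ≠ 0) (s : Fin J → ℤ) {N : ℕ}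
    (hY : N + ∑ j, (s j).natAbs < (Y + 1) ^ b1) :
    |∑ n ∈ Icc 1 N, fbs b1 b2 J s n - ∑ n ∈ Icc 1 N, fbsTrunc b1 b2 Y s n| ≤
      ∑ n ∈ exceptionalSet s, |fbs b1 b2 J s n| + J * (1 + log Y) ^ J := by
  have hbound (n : ℤ) : |fbsTrunc b1 b2 Y s n| ≤ (1 + log Y) ^ J := by
    simpa only [Fintype.card_fin] using abs_fbsTrunc_le hb2 s n
  have hcard : (#(exceptionalSet s) : ℝ) ≤ J := by
    exact_mod_cast card_image_le.trans_eq (card_fin J)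
  have hvanish : ∀ n ∈ Icc 1 N, n ∉ exceptionalSet s →
      fbs b1 b2 J s n - fbsTrunc b1 b2 Y s n = 0 := fun n hn hns ↦ by
    refine sub_eq_zero.2 (fbs_eq_fbsTrunc (fun j hj ↦ hns ?_) fun j ↦ ?_)
    · exact mem_image.2 ⟨j, mem_univ j, by omega⟩
    · have hj : (s j).natAbs ≤ ∑ j, (s j).natAbs :=
        single_le_sum_of_canonicallyOrdered (f := fun j ↦ (s j).natAbs) (mem_univ j)
      have := (mem_Icc.1 hn).2
      omega
  rw [← sum_sub_distrib]
  calc |∑ n ∈ Icc 1 N, (fbs b1 b2 J s n - fbsTrunc b1 b2 Y s n)|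
      = |∑ n ∈ Icc 1 N with n ∈ exceptionalSet s, (fbs b1 b2 J s n - fbsTrunc b1 b2 Y s n)| := by
        rw [sum_filter_of_ne fun n hn ↦ not_imp_comm.1 (hvanish n hn)]
    _ ≤ ∑ n ∈ exceptionalSet s, |fbs b1 b2 J s n - fbsTrunc b1 b2 Y s n| :=
        (abs_sum_le_sum_abs _ _).trans (sum_le_sum_of_subset_of_nonneg
          (fun n hn ↦ (mem_filter.1 hn).2) fun _ _ _ ↦ abs_nonneg _)
    _ ≤ ∑ n ∈ exceptionalSet s, (|fbs b1 b2 J s n| + (1 + log Y) ^ J) :=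
        sum_le_sum fun n _ ↦ (abs_sub _ _).trans (add_le_add_right (hbound n) _)
    _ ≤ ∑ n ∈ exceptionalSet s, |fbs b1 b2 J s n| + J * (1 + log Y) ^ J := by
        rw [sum_add_distrib, sum_const, nsmul_eq_mul]
        gcongr

theorem sum_fbsTrunc_eq (s : ι → ℤ) (N : ℕ) :
    ∑ n ∈ Icc 1 N, fbsTrunc b1 b2 Y s n = ∑ d ∈ boundedTuples ι Y, moebiusDivPow b2 (∏ j, d j) *
      #((Icc 1 N).filter fun n : ℕ ↦ ∀ j, ((d j ^ b1 : ℕ) : ℤ) ∣ n - s j) := by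
  simp only [fbsTrunc, fbsSummand]
  rw [sum_comm]
  refine sum_congr rfl fun d _ ↦ ?_
  simp only [← sum_filter, sum_const, nsmul_eq_mul, mul_comm, Nat.cast_pow]

theorem abs_sum_fbsTrunc_sub_mul_sum_le (hb2 : b2 ≠ 0) (s : ι → ℤ) {x : ℝ} (hx : 0 ≤ x) :
    |∑ n ∈ Icc 1 ⌊x⌋₊, fbsTrunc b1 b2 Y s n -
        x * ∑ d ∈ boundedTuples ι Y, moebiusDivPow (b1 + b2) (∏ j, d j)| ≤
      2 * (1 + log Y) ^ Fintype.card ι := by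
  have hterm (d : ι → ℕ) :
      |moebiusDivPow b2 (∏ j, d j) *
          #((Icc 1 ⌊x⌋₊).filter fun n : ℕ ↦ ∀ j, ((d j ^ b1 : ℕ) : ℤ) ∣ n - s j) -
        x * moebiusDivPow (b1 + b2) (∏ j, d j)| ≤ 2 * |moebiusDivPow b2 (∏ j, d j)| := by
    by_cases hsq : Squarefree (∏ j, d j)
    · have hcount := abs_card_filter_forall_dvd_sub_le
        (fun j ↦ pow_ne_zero b1 (prod_ne_zero_iff.1 hsq.ne_zero j (mem_univ j)))
        (fun i j hij ↦ (pairwise_coprime_of_squarefree_prod hsq hij).pow b1 b1) s hx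
      rw [prod_pow, Nat.cast_pow] at hcount
      rw [mul_moebiusDivPow_add, ← mul_sub, abs_mul, mul_comm]
      gcongr
    · simp only [moebiusDivPow_eq_zero_of_not_squarefree hsq, zero_mul, mul_zero, sub_self,
        abs_zero, le_refl]
  rw [sum_fbsTrunc_eq, mul_sum, ← sum_sub_distrib]
  refine (abs_sum_le_sum_abs _ _).trans ((sum_le_sum fun d _ ↦ hterm d).trans ?_)
  rw [← mul_sum]
  gcongr
  exact sum_abs_moebiusDivPow_prod_le hb2 Y

theorem abs_mul_sum_sub_mul_tprod_le (J : ℕ) (hb1 : 0 < b1) (hb2 : 0 < b2) {x : ℝ} (hx : 0 ≤ x)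
    (hY : x ≤ ((Y : ℝ) + 1) ^ b1) :
    |x * ∑ d ∈ boundedTuples (Fin J) Y, moebiusDivPow (b1 + b2) (∏ j, d j) -
        x * ∏' p : Nat.Primes, (1 - (J : ℝ) / (p : ℝ) ^ (b1 + b2))| ≤
      2 * J * (∑' d : ℕ, 1 / (d : ℝ) ^ (b1 + b2)) ^ (J - 1) := by
  have hk : 2 ≤ b1 + b2 := by omega
  set W : ℝ := ∑' d : ℕ, 1 / (d : ℝ) ^ (b1 + b2)
  have : 0 ≤ W := by positivity
  have hpow : ((Y : ℝ) + 1) ^ b1 ≤ ((Y : ℝ) + 1) ^ (b1 + b2 - 1) :=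
    pow_le_pow_right₀ (by linarith [Nat.cast_nonneg (α := ℝ) Y]) (by omega)
  have htail : |∑' d : Fin J → ℕ, moebiusDivPow (b1 + b2) (∏ j, d j) -
      ∑ d ∈ boundedTuples (Fin J) Y, moebiusDivPow (b1 + b2) (∏ j, d j)| ≤
      2 / ((Y : ℝ) + 1) ^ (b1 + b2 - 1) * J * W ^ (J - 1) := by
    refine (norm_tsum_sub_sum_le
      (f := fun d : Fin J → ℕ ↦ moebiusDivPow (b1 + b2) (∏ j, d j)) (summable_one_div_pow_prod hk)
      (abs_moebiusDivPow_prod_le (b1 + b2)) _).trans ((tsum_pi_prod_sub_sum_piFinset_le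
      (fun _ ↦ by positivity) (Real.summable_one_div_nat_pow.2 hk) _).trans ?_)
    rw [Fintype.card_fin]
    gcongr
    exact tsum_one_div_pow_sub_sum_range_le hk Y
  rw [← tsum_moebiusDivPow_prod_eq_tprod J hk, ← mul_sub, abs_mul, abs_of_nonneg hx, abs_sub_comm]
  calc _ ≤ ((Y : ℝ) + 1) ^ (b1 + b2 - 1) *
          (2 / ((Y : ℝ) + 1) ^ (b1 + b2 - 1) * J * W ^ (J - 1)) :=
        mul_le_mul (hY.trans hpow) htail (abs_nonneg _) (by positivity)
    _ = 2 * J * W ^ (J - 1) := by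
        field_simp

theorem abs_sum_fbs_sub_mul_tprod_le (hb1 : 0 < b1) (hb2 : 0 < b2) (s : Fin J → ℤ) {x : ℝ}
    (hx : 0 ≤ x) (hY : ⌊x⌋₊ + ∑ j, (s j).natAbs < (Y + 1) ^ b1) :
    |∑ n ∈ Icc 1 ⌊x⌋₊, fbs b1 b2 J s n -
        x * ∏' p : Nat.Primes, (1 - (J : ℝ) / (p : ℝ) ^ (b1 + b2))| ≤
      ∑ n ∈ exceptionalSet s, |fbs b1 b2 J s n| +
        2 * J * (∑' d : ℕ, 1 / (d : ℝ) ^ (b1 + b2)) ^ (J - 1) + (J + 2) * (1 + log Y) ^ J := by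
  have hxY : x ≤ ((Y : ℝ) + 1) ^ b1 := by
    have hfloor : ⌊x⌋₊ + 1 ≤ (Y + 1) ^ b1 := (Nat.le_add_right _ _).trans_lt hY
    exact (Nat.lt_floor_add_one x).le.trans (mod_cast hfloor)
  have htrunc := abs_sum_fbs_sub_sum_fbsTrunc_le hb2.ne' s hY
  have hcount := abs_sum_fbsTrunc_sub_mul_sum_le (b1 := b1) (Y := Y) hb2.ne' s hx
  have hmain := abs_mul_sum_sub_mul_tprod_le J hb1 hb2 hx hxY
  rw [Fintype.card_fin] at hcount
  refine (abs_sub_le _ _ _).trans ((add_le_add htrunc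
    ((abs_sub_le _ _ _).trans (add_le_add hcount hmain))).trans_eq ?_)
  ring

end Truncation

theorem exists_one_add_log_le_mul_log (S : ℕ) :
    ∃ A > 0, ∀ x : ℝ, 2 ≤ x → ∀ Y : ℕ, (Y : ℝ) ≤ x + S → 1 + log Y ≤ A * log x := by
  have hlogS : 0 ≤ log (1 + S) := log_nonneg (by linarith [Nat.cast_nonneg (α := ℝ) S])
  have hlog2 : 0 < log 2 := log_pos one_lt_two
  refine ⟨(1 + log (1 + S)) / log 2 + 1, by positivity, fun x hx Y hY ↦ ?_⟩
  have hlogx : log 2 ≤ log x := log_le_log two_pos hx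
  have hlogY : log Y ≤ log (1 + S) + log x := by
    obtain rfl | hY0 := Y.eq_zero_or_pos
    · rw [Nat.cast_zero, log_zero]
      linarith
    · rw [← log_mul (by positivity) (by positivity)]
      refine log_le_log (by positivity) (hY.trans ?_)
      nlinarith [Nat.cast_nonneg (α := ℝ) S]
  have hconst : 1 + log (1 + S) ≤ (1 + log (1 + S)) / log 2 * log x := by
    rw [div_mul_eq_mul_div, le_div_iff₀ hlog2]
    gcongr
  linarith

theorem stmt_10_general (b1 b2 J : ℕ) (hb1 : 0 < b1) (hb2 : 0 < b2) (s : Fin J → ℤ) :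
    ∃ C > 0, ∀ x : ℝ, 2 ≤ x →
      |(∑ n ∈ Icc 1 ⌊x⌋₊, fbs b1 b2 J s (n : ℤ)) -
          x * ∏' p : Nat.Primes, (1 - (J : ℝ) / (p : ℝ) ^ (b1 + b2))|
        ≤ C * (Real.log x) ^ J := by
  obtain ⟨A, hA, hlog⟩ := exists_one_add_log_le_mul_log (∑ j, (s j).natAbs)
  set B : ℝ := ∑ n ∈ exceptionalSet s, |fbs b1 b2 J s n| +
    2 * J * (∑' d : ℕ, 1 / (d : ℝ) ^ (b1 + b2)) ^ (J - 1)
  have : 0 ≤ B := by positivity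
  refine ⟨B / log 2 ^ J + (J + 2) * A ^ J, by positivity, fun x hx ↦ ?_⟩
  set T : ℕ := ⌊x⌋₊ + ∑ j, (s j).natAbs with hT
  have hYT : (Nat.nthRoot b1 T : ℝ) ≤ x + (∑ j, (s j).natAbs : ℕ) := by
    have hle : Nat.nthRoot b1 T ≤ T :=
      (Nat.le_self_pow hb1.ne' _).trans (Nat.pow_nthRoot_le (.inl hb1.ne'))
    refine (Nat.cast_le.2 hle).trans ?_
    rw [hT, Nat.cast_add]
    gcongr
    exact Nat.floor_le (by positivity)
  have hlogx : log 2 ≤ log x := log_le_log two_pos hx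
  calc _ ≤ B + (J + 2) * (1 + log (Nat.nthRoot b1 T)) ^ J :=
        abs_sum_fbs_sub_mul_tprod_le hb1 hb2 s (by positivity)
          (Nat.lt_pow_nthRoot_add_one hb1.ne' T)
    _ ≤ B / log 2 ^ J * log x ^ J + (J + 2) * (A * log x) ^ J := by
        gcongr
        · rw [div_mul_eq_mul_div, le_div_iff₀ (by positivity)]
          gcongr
        · exact hlog x hx _ hYT
    _ = (B / log 2 ^ J + (J + 2) * A ^ J) * log x ^ J := by ring

theorem stmt_10 (b1 b2 J : ℕ) (hb1 : 0 < b1) (hb2 : 0 < b2) (hb : b1 ≤ b2)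
    (hJ : 1 ≤ J) (hJ2 : J < 2 ^ (b1 + b2)) (s : Fin J → ℤ) :
    ∃ C > 0, ∀ x : ℝ, 2 ≤ x →
      |(∑ n ∈ Icc 1 ⌊x⌋₊, fbs b1 b2 J s (n : ℤ)) -
          x * ∏' p : Nat.Primes, (1 - (J : ℝ) / (p : ℝ) ^ (b1 + b2))|
        ≤ C * (Real.log x) ^ J :=
  stmt_10_general b1 b2 J hb1 hb2 s
end

section
/- For complex s with Re(s) > 1 and any integers b1 ≤ b2 with b1 ≥ 1 and any integer r ≥ 1, Σ_{n≥1} f_b(n)^r / n^s = ζ(s) · Π_p (1 − p^{−b1·s} + p^{−b1·s}(1 − p^{−b2})^r), where the product over primes converges absolutely for Re(s) > 0. -/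
open Finset

/-- `f_b(n) = ∑_{d^{b1} ∣ n} μ(d) / d^{b2}`. -/
def fb (b1 b2 : ℕ) (n : ℕ) : ℚ :=
  ∑ d ∈ n.divisors.filter (fun d => d ^ b1 ∣ n),
    (ArithmeticFunction.moebius d : ℚ) / (d : ℚ) ^ b2

/-!
If `f` is multiplicative and `f (p ^ e)` is `1` for `e < k` and `c p` for `e ≥ k`, then summing the
geometric series in `x = p ^ (-s)` gives
`∑ e, f (p ^ e) * x ^ e = (1 - x ^ k + x ^ k * c p) / (1 - x)`, and the factors `1 / (1 - x)`
multiply to `ζ(s)`. The function `f_b ^ r` is of this kind with `k = b1` and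
`c p = (1 - p ^ (-b2)) ^ r`. Since `|c p - 1| ≤ r p ^ (-b2)`, the `p`-th factor of the remaining
product is `1 + O(p ^ (-(b1 * Re s + b2)))`, so that product converges as soon as
`b1 * Re s + b2 > 1`.
-/

lemma norm_pow_sub_one_le {R : Type*} [SeminormedRing R] [NormOneClass R] {a : R} (ha : ‖a‖ ≤ 1)
    (r : ℕ) : ‖a ^ r - 1‖ ≤ r * ‖a - 1‖ := by
  have norm_geom_sum_le : ‖∑ i ∈ range r, a ^ i‖ ≤ r := by
    simpa using norm_sum_le_of_le (range r) fun i _ =>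
      (norm_pow_le a i).trans (pow_le_one₀ (norm_nonneg a) ha)
  calc ‖a ^ r - 1‖ = ‖(∑ i ∈ range r, a ^ i) * (a - 1)‖ := by rw [geom_sum_mul]
    _ ≤ ‖∑ i ∈ range r, a ^ i‖ * ‖a - 1‖ := norm_mul_le _ _
    _ ≤ r * ‖a - 1‖ := by gcongr

lemma norm_one_sub_natCast_cpow_neg_le_one (n b : ℕ) :
    ‖1 - (n : ℂ) ^ (-(b : ℂ))‖ ≤ 1 := by
  have inv_le_one : ((n : ℝ) ^ b)⁻¹ ≤ 1 :=
    mod_cast Nat.cast_inv_le_one (α := ℝ) (n ^ b)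
  have eq_ofReal : 1 - (n : ℂ) ^ (-(b : ℂ)) = ((1 - ((n : ℝ) ^ b)⁻¹ : ℝ) : ℂ) := by
    rw [Complex.cpow_neg, Complex.cpow_natCast]
    push_cast
    rfl
  rw [eq_ofReal, Complex.norm_real, Real.norm_of_nonneg (sub_nonneg.mpr inv_le_one)]
  exact sub_le_self 1 (by positivity)

lemma norm_one_sub_natCast_cpow_neg_pow_sub_one_le {n : ℕ} (hn : n ≠ 0) (b r : ℕ) :
    ‖(1 - (n : ℂ) ^ (-(b : ℂ))) ^ r - 1‖ ≤ r * (n : ℝ) ^ (-(b : ℝ)) := by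
  refine (norm_pow_sub_one_le (norm_one_sub_natCast_cpow_neg_le_one n b) r).trans_eq ?_
  rw [sub_sub_cancel_left, norm_neg, Complex.norm_natCast_cpow_of_pos (Nat.pos_of_ne_zero hn)]
  simp

lemma mul_pow_dvd_mul_iff_of_coprime {m n d e : ℕ} (h : m.Coprime n) (hd : d ∣ m) (he : e ∣ n)
    (k : ℕ) : (d * e) ^ k ∣ m * n ↔ d ^ k ∣ m ∧ e ^ k ∣ n := by
  have coprime_left : (d ^ k).Coprime n := (h.of_dvd_left hd).pow_left k
  have coprime_right : (e ^ k).Coprime m := (h.symm.of_dvd_left he).pow_left k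
  rw [mul_pow]
  exact ⟨fun hdvd => ⟨coprime_left.dvd_of_dvd_mul_right (dvd_of_mul_right_dvd hdvd),
    coprime_right.dvd_of_dvd_mul_left (dvd_of_mul_left_dvd hdvd)⟩, fun h => mul_dvd_mul h.1 h.2⟩

lemma norm_le_one_of_coprime_mul_of_prime_pow {R : Type*} [SeminormedRing R] {f : ℕ → R}
    (hmul : ∀ {m n : ℕ}, m.Coprime n → f (m * n) = f m * f n)
    (hpow : ∀ {p : ℕ}, p.Prime → ∀ e, ‖f (p ^ e)‖ ≤ 1) {n : ℕ} (hn : n ≠ 0) : ‖f n‖ ≤ 1 := by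
  induction n using Nat.recOnPosPrimePosCoprime with
  | zero => exact absurd rfl hn
  | one => simpa using hpow Nat.prime_two 0
  | prime_pow p e hp _ => exact hpow hp e
  | coprime a b ha hb hab iha ihb =>
    rw [hmul hab]
    exact (norm_mul_le _ _).trans
      (mul_le_one₀ (iha (by lia)) (norm_nonneg _) (ihb (by lia)))

lemma hasSum_ite_mul_geometric {K : Type*} [NormedField K] {x : K} (hx : ‖x‖ < 1) (k : ℕ) (c : K) :
    HasSum (fun e : ℕ => (if k ≤ e then c else 1) * x ^ e)
      ((1 - x)⁻¹ * (1 - x ^ k + x ^ k * c)) := by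
  have one_sub_ne_zero : 1 - x ≠ 0 := fun h => by
    simp [← sub_eq_zero.mp h] at hx
  have head_eq : ∑ e ∈ range k, (if k ≤ e then c else 1) * x ^ e = (1 - x ^ k) / (1 - x) := by
    rw [eq_div_iff one_sub_ne_zero, ← geom_sum_mul_neg]
    congr 1
    exact sum_congr rfl fun e he => by rw [if_neg (by simpa using he), one_mul]
  have tail_hasSum : HasSum (fun e : ℕ => (if k ≤ e + k then c else 1) * x ^ (e + k))
      (x ^ k * c * (1 - x)⁻¹) :=
    ((hasSum_geometric_of_norm_lt_one hx).mul_left (x ^ k * c)).congr_fun fun e => by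
      rw [if_pos (Nat.le_add_left k e), pow_add]
      ring
  have sum_eq : (1 - x)⁻¹ * (1 - x ^ k + x ^ k * c) =
      x ^ k * c * (1 - x)⁻¹ + (1 - x ^ k) / (1 - x) := by
    rw [div_eq_mul_inv]
    ring
  rw [sum_eq, ← head_eq]
  exact (hasSum_nat_add_iff k).mp tail_hasSum

section RelEulerFactor

/-- The Euler factor at `p`, divided by that of `ζ`, of the Dirichlet series `∑ f n / n ^ s` of a
multiplicative function `f` such that `f (p ^ e)` is `1` for `e < k` and `c p` for `e ≥ k`. -/
noncomputable def relEulerFactor (k : ℕ) (c : ℕ → ℂ) (s : ℂ) (p : ℕ) : ℂ :=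
  1 - (p : ℂ) ^ (-(k : ℂ) * s) + (p : ℂ) ^ (-(k : ℂ) * s) * c p

variable {k : ℕ} {c : ℕ → ℂ} {s : ℂ}

lemma multipliable_relEulerFactor_of_norm_sub_one_le {C β : ℝ}
    (hc : ∀ {p : ℕ}, p.Prime → ‖c p - 1‖ ≤ C * (p : ℝ) ^ (-β)) (hs : 1 < k * s.re + β) :
    Multipliable fun p : Nat.Primes => relEulerFactor k c s p := by
  have summable_bound : Summable fun p : Nat.Primes => C * (p : ℝ) ^ (-(k * s.re + β)) :=
    (Nat.Primes.summable_rpow.mpr (by linarith)).mul_left C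
  have summable_norm :
      Summable fun p : Nat.Primes => ‖(p : ℂ) ^ (-(k : ℂ) * s) * (c p - 1)‖ := by
    refine summable_bound.of_nonneg_of_le (fun _ => norm_nonneg _) fun p => ?_
    have hp : (0 : ℝ) < (p : ℕ) := mod_cast p.2.pos
    calc ‖(p : ℂ) ^ (-(k : ℂ) * s) * (c p - 1)‖
        = (p : ℝ) ^ (-(k * s.re)) * ‖c p - 1‖ := by
          rw [norm_mul, Complex.norm_natCast_cpow_of_pos p.2.pos]
          simp
      _ ≤ (p : ℝ) ^ (-(k * s.re)) * (C * (p : ℝ) ^ (-β)) := by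
          gcongr
          exact hc p.2
      _ = C * (p : ℝ) ^ (-(k * s.re + β)) := by
          rw [neg_add, Real.rpow_add hp]
          ring
  refine (multipliable_one_add_of_summable summable_norm).congr fun p => ?_
  rw [relEulerFactor]
  ring

lemma multipliable_relEulerFactor_of_norm_le_one (hc : ∀ {p : ℕ}, p.Prime → ‖c p‖ ≤ 1)
    (hs : 1 < k * s.re) : Multipliable fun p : Nat.Primes => relEulerFactor k c s p := by
  refine multipliable_relEulerFactor_of_norm_sub_one_le (C := 2) (β := 0) (fun {p} hp => ?_)
    (by rwa [add_zero])
  calc ‖c p - 1‖ ≤ ‖c p‖ + ‖(1 : ℂ)‖ := norm_sub_le _ _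
    _ ≤ 2 * (p : ℝ) ^ (-0 : ℝ) := by
      rw [norm_one, neg_zero, Real.rpow_zero]
      linarith [hc hp]

lemma hasSum_prime_pow_div_cpow {f : ℕ → ℂ} {p : ℕ} (hp : p.Prime)
    (hpow : ∀ e, f (p ^ e) = if k ≤ e then c p else 1) (hs : 0 < s.re) :
    HasSum (fun e : ℕ => f (p ^ e) / ((p ^ e : ℕ) : ℂ) ^ s)
      ((1 - (p : ℂ) ^ (-s))⁻¹ * relEulerFactor k c s p) := by
  have norm_lt_one : ‖(p : ℂ) ^ (-s)‖ < 1 := by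
    rw [Complex.norm_natCast_cpow_of_pos hp.pos]
    exact Real.rpow_lt_one_of_one_lt_of_neg (mod_cast hp.one_lt) (by simpa using hs)
  have cpow_neg_mul (e : ℕ) : (p : ℂ) ^ (-(e : ℂ) * s) = ((p : ℂ) ^ (-s)) ^ e := by
    rw [← Complex.cpow_nat_mul, neg_mul_comm]
  rw [relEulerFactor, cpow_neg_mul]
  refine (hasSum_ite_mul_geometric norm_lt_one k (c p)).congr_fun fun e => ?_
  rw [hpow, div_eq_mul_inv, ← Complex.cpow_neg, Nat.cast_pow, ← Complex.natCast_cpow_natCast_mul,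
    ← cpow_neg_mul, neg_mul_comm]

theorem hasSum_div_cpow_of_coprime_mul_of_prime_pow {f : ℕ → ℂ} (hk : 1 ≤ k)
    (hmul : ∀ {m n : ℕ}, m.Coprime n → f (m * n) = f m * f n)
    (hpow : ∀ {p : ℕ}, p.Prime → ∀ e, f (p ^ e) = if k ≤ e then c p else 1)
    (hc : ∀ {p : ℕ}, p.Prime → ‖c p‖ ≤ 1) (hs : 1 < s.re) :
    HasSum (fun n : ℕ => f n / (n : ℂ) ^ s)
      (riemannZeta s * ∏' p : Nat.Primes, relEulerFactor k c s p) := by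
  have s_ne_zero : s ≠ 0 := fun h => by norm_num [h] at hs
  have f_one : f 1 = 1 := by
    simpa [Nat.one_le_iff_ne_zero.mp hk] using hpow Nat.prime_two 0
  have norm_f_le_one : ∀ n ≠ 0, ‖f n‖ ≤ 1 := fun n =>
    norm_le_one_of_coprime_mul_of_prime_pow hmul fun hp e => by
      rw [hpow hp]
      split_ifs
      exacts [hc hp, norm_one.le]
  have summable_series : Summable fun n : ℕ => f n / (n : ℂ) ^ s :=
    (LSeriesSummable_of_bounded_of_one_lt_re norm_f_le_one hs).congr
      fun n => LSeries.term_of_ne_zero' s_ne_zero f n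
  have one_lt_mul_re : 1 < k * s.re := one_lt_mul_of_le_of_lt (mod_cast hk) hs
  have euler_product := EulerProduct.eulerProduct_hasProd (f := fun n : ℕ => f n / (n : ℂ) ^ s)
    (by simp [f_one])
    (fun {m n} h => by
      rw [hmul h, Nat.cast_mul, Complex.natCast_mul_natCast_cpow, mul_div_mul_comm])
    summable_series.norm (by simp [s_ne_zero])
  have euler_factor_eq (p : Nat.Primes) : ∑' e : ℕ, f (p ^ e) / (((p : ℕ) ^ e : ℕ) : ℂ) ^ s =
      (1 - (p : ℂ) ^ (-s))⁻¹ * relEulerFactor k c s p :=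
    (hasSum_prime_pow_div_cpow p.2 (hpow p.2) (one_pos.trans hs)).tsum_eq
  rw [((riemannZeta_eulerProduct_hasProd hs).mul
    (multipliable_relEulerFactor_of_norm_le_one hc one_lt_mul_re).hasProd).unique
    (euler_product.congr_fun fun p => (euler_factor_eq p).symm)]
  exact summable_series.hasSum

end RelEulerFactor

section Fb

variable (b1 b2 : ℕ)

lemma fb_mul_of_coprime {m n : ℕ} (h : m.Coprime n) :
    fb b1 b2 (m * n) = fb b1 b2 m * fb b1 b2 n := by
  simp only [fb, sum_filter]
  rw [sum_mul_sum, ← sum_product', Nat.divisors_mul, mul_def, sum_image h.mul_injOn_divisors]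
  refine sum_congr rfl ?_
  rintro ⟨d, e⟩ hde
  obtain ⟨hd, he⟩ : d ∣ m ∧ e ∣ n := by
    simp only [mem_product, Nat.mem_divisors] at hde
    exact ⟨hde.1.1, hde.2.1⟩
  have summand_mul : (ArithmeticFunction.moebius (d * e) : ℚ) / ((d * e : ℕ) : ℚ) ^ b2 =
      ArithmeticFunction.moebius d / (d : ℚ) ^ b2 *
        (ArithmeticFunction.moebius e / (e : ℚ) ^ b2) := by
    rw [ArithmeticFunction.isMultiplicative_moebius.map_mul_of_coprime (h.of_dvd hd he)]
    push_cast
    rw [mul_pow, mul_div_mul_comm]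
  simp only [mul_pow_dvd_mul_iff_of_coprime h hd he, summand_mul, ite_zero_mul_ite_zero]

lemma fb_one : fb b1 b2 1 = 1 := by
  simp [fb, filter_singleton]

variable {b1}

lemma fb_prime_pow (hb1 : 1 ≤ b1) {p : ℕ} (hp : p.Prime) (e : ℕ) :
    fb b1 b2 (p ^ e) = if b1 ≤ e then 1 - ((p : ℚ) ^ b2)⁻¹ else 1 := by
  rcases e with _ | e
  · rw [pow_zero, fb_one, if_neg (by lia)]
  · have pow_dvd_iff : p ^ b1 ∣ p ^ (e + 1) ↔ b1 ≤ e + 1 :=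
      Nat.pow_dvd_pow_iff_le_right hp.one_lt
    -- Only the divisors `1` and `p` of `p ^ (e + 1)` are squarefree.
    rw [fb, sum_filter, Nat.divisors_prime_pow hp, sum_map, sum_range_succ', sum_range_succ',
      sum_eq_zero fun i _ => by simp [ArithmeticFunction.moebius_apply_prime_pow hp]]
    simp only [Function.Embedding.coeFn_mk, zero_add, pow_one, pow_zero, one_pow, one_dvd,
      pow_dvd_iff, ArithmeticFunction.moebius_apply_prime hp, if_true]
    split_ifs
    · simp only [Int.cast_neg, Int.cast_one, ArithmeticFunction.moebius_apply_one, Nat.cast_one,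
        one_pow, div_one, neg_div, one_div]
      ring
    · simp

end Fb

theorem stmt_11_general (b1 b2 r : ℕ) (hb1 : 1 ≤ b1) :
    (∀ s : ℂ, 1 < b1 * s.re + b2 → Multipliable (fun p : Nat.Primes =>
        1 - (p : ℂ) ^ (-(b1 : ℂ) * s) +
          (p : ℂ) ^ (-(b1 : ℂ) * s) * (1 - (p : ℂ) ^ (-(b2 : ℂ))) ^ r)) ∧
    (∀ s : ℂ, 1 < s.re →
      HasSum (fun n : ℕ => (fb b1 b2 n : ℂ) ^ r / (n : ℂ) ^ s)
        (riemannZeta s * ∏' p : Nat.Primes,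
          (1 - (p : ℂ) ^ (-(b1 : ℂ) * s) +
            (p : ℂ) ^ (-(b1 : ℂ) * s) * (1 - (p : ℂ) ^ (-(b2 : ℂ))) ^ r))) := by
  refine ⟨fun s hs => multipliable_relEulerFactor_of_norm_sub_one_le
      (c := fun p => (1 - (p : ℂ) ^ (-(b2 : ℂ))) ^ r)
      (fun hp => norm_one_sub_natCast_cpow_neg_pow_sub_one_le hp.ne_zero b2 r) hs,
    fun s hs => hasSum_div_cpow_of_coprime_mul_of_prime_pow
      (c := fun p => (1 - (p : ℂ) ^ (-(b2 : ℂ))) ^ r) hb1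
      (fun {m n} h => ?_) (fun {p} hp e => ?_) (fun {p} _ => ?_) hs⟩
  · rw [fb_mul_of_coprime b1 b2 h, Rat.cast_mul, mul_pow]
  · rw [fb_prime_pow b2 hb1 hp, Complex.cpow_neg, Complex.cpow_natCast]
    split_ifs <;> simp
  · rw [norm_pow]
    exact pow_le_one₀ (norm_nonneg _) (norm_one_sub_natCast_cpow_neg_le_one p b2)

theorem stmt_11 (b1 b2 r : ℕ) (hb1 : 1 ≤ b1) (hb : b1 ≤ b2) (hr : 1 ≤ r) :
    (∀ s : ℂ, 0 < s.re → Multipliable (fun p : Nat.Primes =>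
        1 - (p : ℂ) ^ (-(b1 : ℂ) * s) +
          (p : ℂ) ^ (-(b1 : ℂ) * s) * (1 - (p : ℂ) ^ (-(b2 : ℂ))) ^ r)) ∧
    (∀ s : ℂ, 1 < s.re →
      ∑' n : ℕ, (fb b1 b2 n : ℂ) ^ r / (n : ℂ) ^ s =
        riemannZeta s * ∏' p : Nat.Primes,
          (1 - (p : ℂ) ^ (-(b1 : ℂ) * s) +
            (p : ℂ) ^ (-(b1 : ℂ) * s) * (1 - (p : ℂ) ^ (-(b2 : ℂ))) ^ r)) := by
  refine ⟨fun s hs => (stmt_11_general b1 b2 r hb1).1 s ?_,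
    fun s hs => ((stmt_11_general b1 b2 r hb1).2 s hs).tsum_eq⟩
  have hb1_pos : (0 : ℝ) < b1 := mod_cast hb1
  have hb2 : (1 : ℝ) ≤ b2 := mod_cast hb1.trans hb
  linarith [mul_pos hb1_pos hs]
end

section
/- Let r ≥ 1 be an integer and 1 ≤ b1 ≤ b2. For x ≥ 2 and any ε > 0, Σ_{n ≤ x} f_b(n)^r = C_{b,r}·x + O(x^{1/2+ε}), where C_{b,r} = Π_p (1 − p^{−b1} + p^{−b1}(1 − p^{−b2})^r) and the implied constant depends on ε, b, r. -/
open Finset Real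

/-!
The `r`-th power of `f_b` is a product of local factors `1 + a_p`, taken over the primes `p` with
`p ^ b1 ∣ n`, where `a_p = (1 - p ^ (-b2)) ^ r - 1`. Expanding this product over finite sets `S` of
primes and exchanging the sums, `∑_{n ≤ x} f_b(n) ^ r` becomes
`∑_S (∏_{p ∈ S} a_p) ⌊x / ∏_{p ∈ S} p ^ b1⌋`. Replacing `⌊y⌋` by `y` gives the main term, and since
`|⌊y⌋ - y| ≤ y ^ θ` for `0 ≤ θ ≤ 1`, the error is at most `x ^ θ ∏_p (1 + |a_p| / p ^ (b1 θ))`.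
As `|a_p| ≤ r / p ^ b2`, this product converges when `b1 θ + b2 > 1`, in particular for `θ = 1 / 2`.
-/

section SumOverDivisors

open ArithmeticFunction UniqueFactorizationMonoid
open scoped ArithmeticFunction.Moebius ArithmeticFunction.zeta

theorem sum_divisors_moebius_mul_eq_prod_primeFactors {R : Type*} [CommRing R]
    {f : ArithmeticFunction R} (hf : f.IsMultiplicative) {n : ℕ} (hn : n ≠ 0) :
    ∑ d ∈ n.divisors, (μ d : R) * f d = ∏ p ∈ n.primeFactors, (1 - f p) := by
  have hrad : (radical n).primeFactors = n.primeFactors := by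
    simp only [← primeFactors_eq_natPrimeFactors, primeFactors_radical]
  rw [← hrad, hf.prodPrimeFactors_one_sub_of_squarefree f squarefree_radical]
  refine (sum_subset (Nat.divisors_subset_of_dvd hn radical_dvd_self) fun d hd hd' => ?_).symm
  have hd_not_squarefree : ¬ Squarefree d := fun hsq => hd' <| Nat.mem_divisors.2
    ⟨(dvd_radical_iff hsq.isRadical hn).2 (Nat.dvd_of_mem_divisors hd), radical_ne_zero⟩
  simp only [moebius_eq_zero_of_not_squarefree hd_not_squarefree, Int.cast_zero, zero_mul]

theorem filter_pow_dvd_divisors_eq_divisors_floorRoot {k : ℕ} (hk : k ≠ 0) (n : ℕ) :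
    n.divisors.filter (fun d => d ^ k ∣ n) = (Nat.floorRoot k n).divisors := by
  ext d
  simp only [mem_filter, Nat.mem_divisors, Nat.pow_dvd_iff_dvd_floorRoot, Nat.floorRoot_ne_zero]
  have hdvd : d ∣ Nat.floorRoot k n → d ∣ n := fun h =>
    (dvd_pow_self d hk).trans (Nat.pow_dvd_iff_dvd_floorRoot.2 h)
  tauto

theorem fb_eq_prod_primeFactors_floorRoot {b1 : ℕ} (hb1 : b1 ≠ 0) (b2 : ℕ) {n : ℕ} (hn : n ≠ 0) :
    fb b1 b2 n = ∏ p ∈ (Nat.floorRoot b1 n).primeFactors, (1 - 1 / (p : ℚ) ^ b2) := by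
  let f : ArithmeticFunction ℚ := pdiv (ζ : ArithmeticFunction ℚ) (pow b2 : ArithmeticFunction ℚ)
  have hf : f.IsMultiplicative := isMultiplicative_zeta.natCast.pdiv isMultiplicative_pow.natCast
  have hf_apply {d : ℕ} (hd : d ≠ 0) : f d = 1 / (d : ℚ) ^ b2 := by
    simp [f, pow_apply, hd]
  have hroot : Nat.floorRoot b1 n ≠ 0 := Nat.floorRoot_ne_zero.2 ⟨hb1, hn⟩
  calc fb b1 b2 n = ∑ d ∈ (Nat.floorRoot b1 n).divisors, (μ d : ℚ) * f d := by
        rw [fb, filter_pow_dvd_divisors_eq_divisors_floorRoot hb1]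
        refine sum_congr rfl fun d hd => ?_
        rw [hf_apply (ne_zero_of_dvd_ne_zero hroot (Nat.dvd_of_mem_divisors hd)), mul_one_div]
    _ = ∏ p ∈ (Nat.floorRoot b1 n).primeFactors, (1 - f p) :=
        sum_divisors_moebius_mul_eq_prod_primeFactors hf hroot
    _ = _ := prod_congr rfl fun p hp => by
        rw [hf_apply (Nat.prime_of_mem_primeFactors hp).ne_zero]

end SumOverDivisors

section CoprimeModuli

variable {ι : Type*} {m : ι → ℕ}

theorem prod_dvd_iff_of_pairwise_coprime (hm : Pairwise (Function.onFun Nat.Coprime m))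
    (S : Finset ι) (n : ℕ) : ∏ i ∈ S, m i ∣ n ↔ ∀ i ∈ S, m i ∣ n := by
  refine ⟨fun h i hi => (dvd_prod_of_mem m hi).trans h, prod_dvd_of_isRelPrime ?_⟩
  exact fun i _ j _ hij => Nat.coprime_iff_isRelPrime.1 (hm hij)

theorem hasSum_ite_prod_dvd {R : Type*} [CommSemiring R] [TopologicalSpace R]
    (hm : Pairwise (Function.onFun Nat.Coprime m)) (a : ι → R) {n : ℕ} {T : Finset ι}
    (hT : ∀ i, i ∈ T ↔ m i ∣ n) :
    HasSum (fun S : Finset ι => if ∏ i ∈ S, m i ∣ n then ∏ i ∈ S, a i else 0)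
      (∏ i ∈ T, (1 + a i)) := by
  have hdvd (S : Finset ι) : ∏ i ∈ S, m i ∣ n ↔ S ∈ T.powerset := by
    simp only [prod_dvd_iff_of_pairwise_coprime hm, mem_powerset, subset_iff, hT]
  have hexpand : ∏ i ∈ T, (1 + a i) =
      ∑ S ∈ T.powerset, if ∏ i ∈ S, m i ∣ n then ∏ i ∈ S, a i else 0 := by
    rw [prod_one_add]
    exact sum_congr rfl fun S hS => (if_pos ((hdvd S).2 hS)).symm
  rw [hexpand]
  exact hasSum_sum_of_ne_finset_zero fun S hS => if_neg (mt (hdvd S).1 hS)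

theorem card_filter_dvd_Icc_one_floor (x : ℝ) (d : ℕ) :
    #{n ∈ Icc 1 ⌊x⌋₊ | d ∣ n} = ⌊x / d⌋₊ := by
  rw [Nat.floor_div_natCast]
  exact Nat.Ioc_filter_dvd_card_eq_div _ _

theorem hasSum_floor_div_prod_mul_prod {R : Type*} [CommSemiring R] [TopologicalSpace R]
    [ContinuousAdd R] (hm : Pairwise (Function.onFun Nat.Coprime m)) (a : ι → R)
    {s : ℕ → Finset ι} (hs : ∀ n ≠ 0, ∀ i, i ∈ s n ↔ m i ∣ n) (x : ℝ) :
    HasSum (fun S : Finset ι => (⌊x / (∏ i ∈ S, m i : ℕ)⌋₊ : R) * ∏ i ∈ S, a i)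
      (∑ n ∈ Icc 1 ⌊x⌋₊, ∏ i ∈ s n, (1 + a i)) := by
  have hsum := hasSum_sum (s := Icc 1 ⌊x⌋₊) fun n hn =>
    hasSum_ite_prod_dvd hm a (hs n (Nat.one_le_iff_ne_zero.1 (mem_Icc.1 hn).1))
  simpa only [← sum_filter, sum_const, nsmul_eq_mul, card_filter_dvd_Icc_one_floor] using hsum

end CoprimeModuli

section MeanValue

theorem abs_floor_sub_le_rpow {y θ : ℝ} (hy : 0 ≤ y) (hθ0 : 0 ≤ θ) (hθ1 : θ ≤ 1) :
    |(⌊y⌋₊ : ℝ) - y| ≤ y ^ θ := by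
  rw [abs_sub_comm, abs_of_nonneg (Nat.zero_le_self_sub_floor hy)]
  rcases le_total y 1 with hy1 | hy1
  · exact (sub_le_self y (Nat.cast_nonneg _)).trans (self_le_rpow_of_le_one hy hy1 hθ1)
  · exact (Nat.self_sub_floor_lt_one y).le.trans (one_le_rpow hy1 hθ0)

theorem one_le_tprod_one_add {ι : Type*} {c : ι → ℝ} (hc0 : ∀ i, 0 ≤ c i) (hc : Summable c) :
    1 ≤ ∏' i, (1 + c i) := by
  have hsum := summable_finsetProd_of_summable_nonneg hc0 hc
  rw [tprod_one_add hsum]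
  simpa only [prod_empty] using hsum.le_tsum ∅ fun S _ => prod_nonneg fun i _ => hc0 i

variable {ι 𝕜 : Type*} [RCLike 𝕜] {a : ι → 𝕜} {m : ι → ℕ} {θ : ℝ}

theorem summable_norm_div_of_summable_div_rpow (hm0 : ∀ i, m i ≠ 0) (hθ : θ ≤ 1)
    (ha : Summable fun i => ‖a i‖ / (m i : ℝ) ^ θ) : Summable fun i => ‖a i / (m i : 𝕜)‖ := by
  refine ha.of_nonneg_of_le (fun i => norm_nonneg _) fun i => ?_
  have hmi : (1 : ℝ) ≤ m i := mod_cast Nat.one_le_iff_ne_zero.2 (hm0 i)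
  rw [norm_div, RCLike.norm_natCast]
  gcongr
  exact rpow_le_self_of_one_le hmi hθ

theorem norm_floor_div_prod_mul_prod_sub_le (S : Finset ι)
    (hθ0 : 0 ≤ θ) (hθ1 : θ ≤ 1) {x : ℝ} (hx : 0 ≤ x) :
    ‖(⌊x / (∏ i ∈ S, m i : ℕ)⌋₊ : 𝕜) * ∏ i ∈ S, a i - (∏ i ∈ S, a i / (m i : 𝕜)) * (x : 𝕜)‖ ≤
      (∏ i ∈ S, ‖a i‖ / (m i : ℝ) ^ θ) * x ^ θ := by
  set y : ℝ := x / (∏ i ∈ S, m i : ℕ) with hy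
  have hy0 : 0 ≤ y := by positivity
  have hfactor : (⌊y⌋₊ : 𝕜) * ∏ i ∈ S, a i - (∏ i ∈ S, a i / (m i : 𝕜)) * (x : 𝕜) =
      (∏ i ∈ S, a i) * ((⌊y⌋₊ - y : ℝ) : 𝕜) := by
    rw [prod_div_distrib, hy]
    push_cast
    ring
  have hy_rpow : y ^ θ = x ^ θ / ∏ i ∈ S, (m i : ℝ) ^ θ := by
    rw [hy, div_rpow hx (Nat.cast_nonneg _), Nat.cast_prod,
      ← finsetProd_rpow _ _ fun i _ => Nat.cast_nonneg _]
  calc _ = (∏ i ∈ S, ‖a i‖) * |(⌊y⌋₊ : ℝ) - y| := by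
        rw [hfactor, norm_mul, norm_prod, RCLike.norm_ofReal]
    _ ≤ (∏ i ∈ S, ‖a i‖) * y ^ θ := by
        gcongr
        exact abs_floor_sub_le_rpow hy0 hθ0 hθ1
    _ = _ := by
        rw [hy_rpow, prod_div_distrib]
        ring

theorem norm_sum_prod_one_add_sub_tprod_mul_le (hm : Pairwise (Function.onFun Nat.Coprime m))
    (hm0 : ∀ i, m i ≠ 0) {s : ℕ → Finset ι} (hs : ∀ n ≠ 0, ∀ i, i ∈ s n ↔ m i ∣ n)
    (hθ0 : 0 ≤ θ) (hθ1 : θ ≤ 1) (ha : Summable fun i => ‖a i‖ / (m i : ℝ) ^ θ)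
    {x : ℝ} (hx : 0 ≤ x) :
    ‖∑ n ∈ Icc 1 ⌊x⌋₊, ∏ i ∈ s n, (1 + a i) - (∏' i, (1 + a i / (m i : 𝕜))) * (x : 𝕜)‖ ≤
      (∏' i, (1 + ‖a i‖ / (m i : ℝ) ^ θ)) * x ^ θ := by
  have hmain : Summable fun S : Finset ι => ∏ i ∈ S, a i / (m i : 𝕜) :=
    summable_finsetProd_of_summable_norm (summable_norm_div_of_summable_div_rpow hm0 hθ1 ha)
  have herror : Summable fun S : Finset ι => ∏ i ∈ S, ‖a i‖ / (m i : ℝ) ^ θ :=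
    summable_finsetProd_of_summable_nonneg (fun i => by positivity) ha
  have hsum := hasSum_floor_div_prod_mul_prod hm a hs x
  have hdiff := hsum.sub (hmain.hasSum.mul_right (x : 𝕜))
  rw [tprod_one_add hmain, tprod_one_add herror]
  exact hdiff.norm_le_of_bounded (herror.hasSum.mul_right (x ^ θ))
    fun S => norm_floor_div_prod_mul_prod_sub_le S hθ0 hθ1 hx

end MeanValue

section LocalFactors

theorem abs_one_sub_pow_sub_one_le {t : ℝ} (ht0 : 0 ≤ t) (ht1 : t ≤ 1) (r : ℕ) :
    |(1 - t) ^ r - 1| ≤ r * t := by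
  have hmax : max |1 - t| 1 = 1 := max_eq_right (abs_le.2 ⟨by linarith, by linarith⟩)
  simpa [hmax, abs_of_nonneg ht0, mul_comm] using abs_pow_sub_pow_le (1 - t) 1 r

theorem summable_primes_norm_one_sub_pow_sub_one_div {k l : ℕ} {θ : ℝ} (h : 1 < k * θ + l) (r : ℕ) :
    Summable fun p : Nat.Primes =>
      ‖(1 - 1 / (p : ℝ) ^ l) ^ r - 1‖ / (((p : ℕ) ^ k : ℕ) : ℝ) ^ θ := by
  have hprimes : Summable fun p : Nat.Primes => (r : ℝ) * (p : ℝ) ^ (-(k * θ + l)) :=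
    (Nat.Primes.summable_rpow.2 (by linarith)).mul_left _
  refine hprimes.of_nonneg_of_le (fun p => by positivity) fun p => ?_
  have hp1 : (1 : ℝ) ≤ p := mod_cast p.2.one_le
  have hp0 : (0 : ℝ) < p := by positivity
  have hlocal : ‖(1 - 1 / (p : ℝ) ^ l) ^ r - 1‖ ≤ r * (1 / (p : ℝ) ^ l) :=
    abs_one_sub_pow_sub_one_le (by positivity)
      (div_le_one_of_le₀ (one_le_pow₀ hp1) (by positivity)) r
  calc _ ≤ r * (1 / (p : ℝ) ^ l) / (((p : ℕ) ^ k : ℕ) : ℝ) ^ θ := by gcongr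
    _ = r * (p : ℝ) ^ (-(k * θ + l)) := by
        rw [rpow_neg hp0.le, rpow_add hp0, rpow_mul hp0.le, rpow_natCast, rpow_natCast]
        push_cast
        field_simp

end LocalFactors

section PrimePowers

/-- The primes `p` with `p ^ k ∣ n`, for `k` and `n` nonzero: they are the prime factors of the
largest `d` with `d ^ k ∣ n`. They are bundled as elements of `Nat.Primes` to match the index of
the Euler product. -/
def primesPowDvd (k n : ℕ) : Finset Nat.Primes :=
  (Nat.floorRoot k n).primeFactors.subtype Nat.Prime

theorem mem_primesPowDvd {k n : ℕ} (hk : k ≠ 0) (hn : n ≠ 0) (p : Nat.Primes) :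
    p ∈ primesPowDvd k n ↔ (p : ℕ) ^ k ∣ n := by
  have hmem : p ∈ primesPowDvd k n ↔ (p : ℕ) ∈ (Nat.floorRoot k n).primeFactors := mem_subtype
  rw [hmem, Nat.mem_primeFactors_of_ne_zero (Nat.floorRoot_ne_zero.2 ⟨hk, hn⟩),
    Nat.pow_dvd_iff_dvd_floorRoot, and_iff_right p.2]

theorem pairwise_coprime_primes_pow (k : ℕ) :
    Pairwise (Function.onFun Nat.Coprime fun p : Nat.Primes => (p : ℕ) ^ k) :=
  fun p q hpq => Nat.coprime_pow_primes k k p.2 q.2 (Subtype.coe_ne_coe.2 hpq)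

theorem cast_fb_pow_eq_prod {b1 n : ℕ} (hb1 : b1 ≠ 0) (hn : n ≠ 0) (b2 r : ℕ) :
    (fb b1 b2 n : ℝ) ^ r = ∏ p ∈ primesPowDvd b1 n, (1 - 1 / (p : ℝ) ^ b2) ^ r := by
  rw [fb_eq_prod_primeFactors_floorRoot hb1 b2 hn, prod_pow]
  push_cast
  exact congrArg (· ^ r) (prod_subtype_of_mem (fun p : ℕ => 1 - 1 / (p : ℝ) ^ b2)
    fun p => Nat.prime_of_mem_primeFactors).symm

end PrimePowers

theorem stmt_12_general (b1 b2 r : ℕ) (hb1 : b1 ≠ 0) {θ : ℝ} (hθ0 : 0 ≤ θ) (hθ1 : θ ≤ 1)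
    (hθ : 1 < b1 * θ + b2) :
    ∃ C > 0, ∀ x : ℝ, 0 ≤ x →
      |(∑ n ∈ Icc 1 ⌊x⌋₊, (fb b1 b2 n : ℝ) ^ r) -
          (∏' p : Nat.Primes,
            (1 - 1 / (p : ℝ) ^ b1 + 1 / (p : ℝ) ^ b1 * (1 - 1 / (p : ℝ) ^ b2) ^ r)) * x|
        ≤ C * x ^ θ := by
  let a : Nat.Primes → ℝ := fun p => (1 - 1 / (p : ℝ) ^ b2) ^ r - 1
  have ha := summable_primes_norm_one_sub_pow_sub_one_div hθ r
  refine ⟨_, zero_lt_one.trans_le (one_le_tprod_one_add (fun p => by positivity) ha),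
    fun x hx => ?_⟩
  have hbound := norm_sum_prod_one_add_sub_tprod_mul_le (pairwise_coprime_primes_pow b1)
    (fun p => pow_ne_zero b1 p.2.ne_zero) (fun n hn => mem_primesPowDvd hb1 hn) hθ0 hθ1 ha hx
  have hsum : ∑ n ∈ Icc 1 ⌊x⌋₊, (fb b1 b2 n : ℝ) ^ r =
      ∑ n ∈ Icc 1 ⌊x⌋₊, ∏ p ∈ primesPowDvd b1 n, (1 + a p) :=
    sum_congr rfl fun n hn => by
      simp only [a, add_sub_cancel,
        cast_fb_pow_eq_prod hb1 (Nat.one_le_iff_ne_zero.1 (mem_Icc.1 hn).1)]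
  have hfactor (p : Nat.Primes) : 1 - 1 / (p : ℝ) ^ b1 +
      1 / (p : ℝ) ^ b1 * (1 - 1 / (p : ℝ) ^ b2) ^ r = 1 + a p / (((p : ℕ) ^ b1 : ℕ) : ℝ) := by
    simp only [a, Nat.cast_pow]
    ring
  rw [hsum, tprod_congr hfactor]
  exact hbound

theorem stmt_12 (b1 b2 r : ℕ) (hb1 : 1 ≤ b1) (hb : b1 ≤ b2) (hr : 1 ≤ r) :
    ∀ ε : ℝ, 0 < ε → ∃ C > 0, ∀ x : ℝ, 2 ≤ x →
      |(∑ n ∈ Icc 1 ⌊x⌋₊, (fb b1 b2 n : ℝ) ^ r) -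
          (∏' p : Nat.Primes,
            (1 - 1 / (p : ℝ) ^ b1 + 1 / (p : ℝ) ^ b1 * (1 - 1 / (p : ℝ) ^ b2) ^ r)) * x|
        ≤ C * x ^ ((1 : ℝ) / 2 + ε) := by
  intro ε hε
  have hb1' : (1 : ℝ) ≤ b1 := mod_cast hb1
  have hb2' : (1 : ℝ) ≤ b2 := mod_cast hb1.trans hb
  obtain ⟨C, hC, hbound⟩ := stmt_12_general b1 b2 r (Nat.one_le_iff_ne_zero.1 hb1)
    (θ := 1 / 2) (by norm_num) (by norm_num) (by linarith)
  refine ⟨C, hC, fun x hx => (hbound x (by linarith)).trans ?_⟩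
  gcongr <;> linarith
end

section
/- Let J ≥ 1, 0 < α < 1, m, n ∈ ℕ, and let s = (s_1,...,s_J), t = (t_1,...,t_J) be integer vectors with gcd_b(s_{j1} − s_{j2}, t_{j1} − t_{j2}) = 1 for all j1 ≠ j2. Suppose n > max_j |s_j|. Then for any ε > 0, Σ_{0 ≤ k ≤ m, gcd_b(n−s_j, k−t_j)=1 ∀j} C(m,k) α^k (1−α)^{m−k} = f_{b,s}(n) + O(n^ε · m^{−1/2}), where f_{b,s}(n) = Σ μ(d_1)···μ(d_J)/(d_1···d_J)^{b2} over pairwise-coprime tuples (d_1,...,d_J) with d_j^{b1} | n − s_j for all j, and the implied constant depends on α, J, ε. -/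
open Finset Real
open scoped Classical

/-- Generalized gcd: the largest positive integer `d` with `d^b1 ∣ m` and `d^b2 ∣ n`. -/
noncomputable def gcdb (b1 b2 : ℕ) (m n : ℤ) : ℕ :=
  sSup {d : ℕ | 0 < d ∧ (d : ℤ) ^ b1 ∣ m ∧ (d : ℤ) ^ b2 ∣ n}

/-!
The numbers `d` dividing `gcdb b1 b2 (n - s j) (k - t j)` are exactly the common ones, those with
`d ^ b1 ∣ n - s j` and `d ^ b2 ∣ k - t j`, so each coprimality condition is a sum of `μ d` over
them. After multiplying out over `j`, the hypothesis on `s` and `t` leaves only tuples of pairwise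
coprime `d j`. For such a tuple `k` runs through one residue class modulo `∏ j, d j ^ b2`, which
receives its fair share of any weight up to the total variation of that weight. The binomial
weights are Bernstein polynomials `B k` in `α`; their increments are proportional to derivatives,
and `x (1 - x) (d/dx) (B k) = (k - m x) (B k)`, the variance formula and the Cauchy–Schwarz
inequality give total variation `O(m ^ (-1/2))`. The divisor bound controls the number of tuples.
-/

open scoped ArithmeticFunction.Moebius

section DivisorBound

lemma add_one_le_max_mul_pow {x : ℝ} (hx : 1 < x) (a : ℕ) :
    (a : ℝ) + 1 ≤ max 1 (x - 1)⁻¹ * x ^ a := by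
  have hx0 : 0 < x - 1 := sub_pos.2 hx
  have hK : 1 ≤ max 1 (x - 1)⁻¹ * (x - 1) :=
    (inv_mul_cancel₀ hx0.ne').ge.trans (by gcongr; exact le_max_right _ _)
  calc (a : ℝ) + 1 ≤ a * (max 1 (x - 1)⁻¹ * (x - 1)) + max 1 (x - 1)⁻¹ :=
        add_le_add (le_mul_of_one_le_right a.cast_nonneg hK) (le_max_left _ _)
    _ = max 1 (x - 1)⁻¹ * (1 + a * (x - 1)) := by ring
    _ ≤ max 1 (x - 1)⁻¹ * x ^ a := by
        gcongr
        exact one_add_mul_sub_le_pow (by linarith) a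

lemma natCast_rpow_eq_prod_primeFactors {N : ℕ} (hN : N ≠ 0) (δ : ℝ) :
    (N : ℝ) ^ δ = ∏ p ∈ N.primeFactors, ((p : ℝ) ^ δ) ^ N.factorization p := by
  conv_lhs => rw [← Nat.prod_factorization_pow_eq_self hN]
  rw [Nat.prod_factorization_eq_prod_primeFactors, Nat.cast_prod,
    ← Real.finsetProd_rpow _ _ fun p _ => Nat.cast_nonneg _]
  exact prod_congr rfl fun p _ => by rw [Nat.cast_pow, Real.rpow_pow_comm p.cast_nonneg]

-- Only the finitely many primes with `p ^ δ < 2` contribute a factor exceeding `1`.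
lemma exists_forall_card_divisors_le_mul_rpow {δ : ℝ} (hδ : 0 < δ) :
    ∃ C > 0, ∀ N : ℕ, (#N.divisors : ℝ) ≤ C * (N : ℝ) ^ δ := by
  obtain ⟨P, hP⟩ := exists_nat_ge ((2 : ℝ) ^ δ⁻¹)
  let K (p : ℕ) : ℝ := max 1 ((p : ℝ) ^ δ - 1)⁻¹
  have one_le_K (p : ℕ) : 1 ≤ K p := le_max_left _ _
  have K_eq_one {p : ℕ} (hp : P ≤ p) : K p = 1 := by
    have h2 : (2 : ℝ) ≤ (p : ℝ) ^ δ := by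
      rw [← Real.rpow_inv_le_iff_of_pos (by norm_num) p.cast_nonneg hδ]
      exact hP.trans (by exact_mod_cast hp)
    exact max_eq_left (inv_le_one_of_one_le₀ (by linarith))
  refine ⟨∏ p ∈ range P, K p, prod_pos fun p _ => zero_lt_one.trans_le (one_le_K p), fun N => ?_⟩
  rcases eq_or_ne N 0 with rfl | hN
  · simp [Real.zero_rpow hδ.ne']
  calc (#N.divisors : ℝ) = ∏ p ∈ N.primeFactors, ((N.factorization p : ℝ) + 1) := by
        rw [Nat.card_divisors hN]
        push_cast
        rfl
    _ ≤ ∏ p ∈ N.primeFactors, K p * ((p : ℝ) ^ δ) ^ N.factorization p := by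
        gcongr with p hp
        have hp1 : (1 : ℝ) < p := by exact_mod_cast (Nat.prime_of_mem_primeFactors hp).one_lt
        exact add_one_le_max_mul_pow (Real.one_lt_rpow hp1 hδ) _
    _ = (∏ p ∈ N.primeFactors with p < P, K p) * (N : ℝ) ^ δ := by
        rw [prod_mul_distrib, natCast_rpow_eq_prod_primeFactors hN,
          prod_filter_of_ne fun p _ hp => not_le.1 fun h => hp (K_eq_one h)]
    _ ≤ (∏ p ∈ range P, K p) * (N : ℝ) ^ δ := by
        refine mul_le_mul_of_nonneg_right ?_ (by positivity)
        exact prod_le_prod_of_subset_of_one_le (fun p hp => mem_range.2 (mem_filter.1 hp).2)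
          (fun p _ => zero_le_one.trans (one_le_K p)) fun p _ _ => one_le_K p

lemma exists_forall_prod_card_divisors_le_mul_rpow (ι : Type*) [Fintype ι] {ε : ℝ} (hε : 0 < ε) :
    ∃ C > 0, ∀ X : ℝ, 1 ≤ X → ∀ x : ι → ℕ, (∀ i, (x i : ℝ) ≤ X) →
      (∏ i, #(x i).divisors : ℝ) ≤ C * X ^ ε := by
  set δ : ℝ := ε / (Fintype.card ι + 1)
  have hδ : 0 < δ := by positivity
  have hδε : δ * Fintype.card ι ≤ ε :=
    calc δ * Fintype.card ι ≤ δ * (Fintype.card ι + 1) := by gcongr; linarith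
      _ = ε := div_mul_cancel₀ _ (by positivity)
  obtain ⟨C, hC, hdiv⟩ := exists_forall_card_divisors_le_mul_rpow hδ
  refine ⟨C ^ Fintype.card ι, by positivity, fun X hX x hx => ?_⟩
  calc (∏ i, #(x i).divisors : ℝ) ≤ ∏ _i : ι, C * X ^ δ := by
        gcongr with i
        exact (hdiv _).trans (by gcongr; exact hx i)
    _ = C ^ Fintype.card ι * X ^ (δ * Fintype.card ι) := by
        rw [prod_const, card_univ, mul_pow, Real.rpow_mul_natCast (by linarith)]
    _ ≤ C ^ Fintype.card ι * X ^ ε := by gcongr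

end DivisorBound

section ResidueClasses

variable (w : ℕ → ℝ) {D M : ℕ}

lemma sum_range_mul_eq_sum_sum (Q : ℕ) :
    ∑ k ∈ range (Q * D), w k = ∑ q ∈ range Q, ∑ i ∈ range D, w (q * D + i) := by
  induction Q with
  | zero => simp
  | succ Q ih => rw [Nat.succ_mul, sum_range_add, ih, sum_range_succ]

lemma abs_sub_le_sum_abs_sub (a : ℕ) {i j : ℕ} (hi : i < D) (hj : j < D) :
    |w (a + i) - w (a + j)| ≤ ∑ l ∈ range D, |w (a + l + 1) - w (a + l)| := by
  wlog hij : i ≤ j generalizing i j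
  · rw [abs_sub_comm]
    exact this hj hi (le_of_not_ge hij)
  calc |w (a + i) - w (a + j)| ≤ ∑ l ∈ Ico i j, |w (a + l) - w (a + l + 1)| :=
        dist_le_Ico_sum_dist (fun l => w (a + l)) hij
    _ = ∑ l ∈ Ico i j, |w (a + l + 1) - w (a + l)| := by simp only [abs_sub_comm]
    _ ≤ ∑ l ∈ range D, |w (a + l + 1) - w (a + l)| :=
        sum_le_sum_of_subset_of_nonneg (fun l hl => by grind) fun _ _ _ => abs_nonneg _

lemma sum_range_mul_filter_modEq (hD : 0 < D) (r Q : ℕ) :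
    ∑ k ∈ range (Q * D) with k ≡ r [MOD D], w k = ∑ q ∈ range Q, w (q * D + r % D) := by
  rw [sum_filter, sum_range_mul_eq_sum_sum]
  refine sum_congr rfl fun q _ => ?_
  rw [sum_eq_single_of_mem (r % D) (mem_range.2 (Nat.mod_lt r hD))]
  · simp [Nat.ModEq]
  · intro i hi hir
    have : (q * D + i) % D = i := by simp [Nat.mod_eq_of_lt (mem_range.1 hi)]
    exact if_neg fun h => hir (this.symm.trans h)

-- Each of the `D` residue classes has the same sum up to the total variation of `w`.
lemma abs_mul_sum_modEq_sub_sum_le (hD : 0 < D) (r Q : ℕ) :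
    |D * (∑ k ∈ range (Q * D) with k ≡ r [MOD D], w k) - ∑ k ∈ range (Q * D), w k|
      ≤ D * ∑ k ∈ range (Q * D), |w (k + 1) - w k| := by
  let S (i : ℕ) : ℝ := ∑ q ∈ range Q, w (q * D + i)
  have abs_S_sub_le (i : ℕ) (hi : i ∈ range D) :
      |S (r % D) - S i| ≤ ∑ k ∈ range (Q * D), |w (k + 1) - w k| := by
    rw [← sum_sub_distrib, sum_range_mul_eq_sum_sum (fun k => |w (k + 1) - w k|)]
    exact (abs_sum_le_sum_abs _ _).trans <| sum_le_sum fun q _ =>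
      abs_sub_le_sum_abs_sub w _ (Nat.mod_lt r hD) (mem_range.1 hi)
  calc _ = |∑ i ∈ range D, (S (r % D) - S i)| := by
        rw [sum_range_mul_filter_modEq w hD, sum_range_mul_eq_sum_sum, sum_comm, sum_sub_distrib,
          sum_const, card_range, nsmul_eq_mul]
    _ ≤ ∑ i ∈ range D, |S (r % D) - S i| := abs_sum_le_sum_abs _ _
    _ ≤ _ := (sum_le_card_nsmul _ _ _ abs_S_sub_le).trans_eq (by rw [card_range, nsmul_eq_mul])

variable {w}

lemma abs_sum_modEq_sub_le (hw : ∀ k ≥ M, w k = 0) (hD : 0 < D) (r : ℕ) :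
    |∑ k ∈ range M with k ≡ r [MOD D], w k - (∑ k ∈ range M, w k) / D|
      ≤ ∑ k ∈ range M, |w (k + 1) - w k| := by
  have extend {g : ℕ → ℝ} (hg : ∀ k ≥ M, g k = 0) :
      ∑ k ∈ range M, g k = ∑ k ∈ range (M * D), g k :=
    (eventually_constant_sum hg (Nat.le_mul_of_pos_right M hD)).symm
  have hD' : (0 : ℝ) < D := by exact_mod_cast hD
  refine le_of_mul_le_mul_left ?_ hD'
  calc _ = |D * (∑ k ∈ range M with k ≡ r [MOD D], w k) - ∑ k ∈ range M, w k| := by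
        rw [← abs_of_pos hD', ← abs_mul, abs_of_pos hD', mul_sub, mul_div_cancel₀ _ hD'.ne']
    _ ≤ _ := by
        rw [sum_filter, extend hw, extend (g := fun k => if k ≡ r [MOD D] then w k else 0)
            fun k hk => by rw [hw k hk, ite_self], ← sum_filter,
          extend (g := fun k => |w (k + 1) - w k|) fun k hk => by
            rw [hw k hk, hw (k + 1) (by omega), sub_zero, abs_zero]]
        exact abs_mul_sum_modEq_sub_sum_le w hD r M

end ResidueClasses

section Bernstein

open Polynomial in
lemma X_mul_one_sub_X_mul_derivative_bernsteinPolynomial (R : Type*) [CommRing R] (n k : ℕ) :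
    (X * (1 - X) : R[X]) * derivative (bernsteinPolynomial R n k) =
      ((k : R[X]) - (n : R[X]) * X) * bernsteinPolynomial R n k := by
  rcases lt_or_ge n k with hnk | hkn
  · simp [bernsteinPolynomial.eq_zero_of_lt R hnk]
  obtain ⟨l, rfl⟩ := Nat.exists_eq_add_of_le hkn
  have X_mul_derivative : (X : R[X]) * derivative (X ^ k) = (k : R[X]) * X ^ k := by
    rcases k with _ | k
    · simp
    · rw [derivative_X_pow_succ, pow_succ]
      simp only [map_add, map_natCast, map_one, Nat.cast_succ]
      ring
  have one_sub_X_mul_derivative :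
      (1 - X : R[X]) * derivative ((1 - X) ^ l) = -(l : R[X]) * (1 - X) ^ l := by
    rcases l with _ | l
    · simp
    · rw [derivative_pow_succ, derivative_sub, derivative_one, derivative_X, pow_succ]
      simp only [map_add, map_natCast, map_one, Nat.cast_succ]
      ring
  simp only [bernsteinPolynomial, Nat.add_sub_cancel_left, derivative_mul, derivative_natCast,
    zero_mul, zero_add, Nat.cast_add]
  linear_combination ((k + l).choose k : R[X]) * (1 - X) * (1 - X) ^ l * X_mul_derivative +
    ((k + l).choose k : R[X]) * X * X ^ k * one_sub_X_mul_derivative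

lemma eval_bernsteinPolynomial (n k : ℕ) (x : ℝ) :
    (bernsteinPolynomial ℝ n k).eval x = n.choose k * x ^ k * (1 - x) ^ (n - k) := by
  simp [bernsteinPolynomial]

variable {x : ℝ}

lemma eval_bernsteinPolynomial_nonneg (hx0 : 0 ≤ x) (hx1 : x ≤ 1) (n k : ℕ) :
    0 ≤ (bernsteinPolynomial ℝ n k).eval x := by
  have : 0 ≤ 1 - x := sub_nonneg.2 hx1
  rw [eval_bernsteinPolynomial]
  positivity

lemma sum_eval_bernsteinPolynomial (n : ℕ) (x : ℝ) :
    ∑ k ∈ range (n + 1), (bernsteinPolynomial ℝ n k).eval x = 1 := by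
  rw [← Polynomial.eval_finsetSum, bernsteinPolynomial.sum, Polynomial.eval_one]

lemma sum_sq_mul_eval_bernsteinPolynomial (n : ℕ) (x : ℝ) :
    ∑ k ∈ range (n + 1), (k - n * x) ^ 2 * (bernsteinPolynomial ℝ n k).eval x =
      n * x * (1 - x) := by
  have h := congrArg (Polynomial.eval x) (bernsteinPolynomial.variance ℝ n)
  rw [Polynomial.eval_finsetSum] at h
  simpa [sub_sq_comm] using h

lemma sum_abs_mul_eval_bernsteinPolynomial_le (hx0 : 0 ≤ x) (hx1 : x ≤ 1) (n : ℕ) :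
    ∑ k ∈ range (n + 1), |k - n * x| * (bernsteinPolynomial ℝ n k).eval x ≤
      √(n * x * (1 - x)) := by
  have cauchy_schwarz := sum_sq_le_sum_mul_sum_of_sq_le_mul (range (n + 1))
    (f := fun k : ℕ => (k - n * x) ^ 2 * (bernsteinPolynomial ℝ n k).eval x)
    (g := fun k => (bernsteinPolynomial ℝ n k).eval x)
    (r := fun k : ℕ => |k - n * x| * (bernsteinPolynomial ℝ n k).eval x)
    (fun k _ => mul_nonneg (sq_nonneg _) (eval_bernsteinPolynomial_nonneg hx0 hx1 n k))
    (fun k _ => eval_bernsteinPolynomial_nonneg hx0 hx1 n k)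
    (fun k _ => by rw [mul_pow, sq_abs, sq (Polynomial.eval _ _), mul_assoc])
  rw [sum_sq_mul_eval_bernsteinPolynomial, sum_eval_bernsteinPolynomial, mul_one] at cauchy_schwarz
  exact Real.le_sqrt_of_sq_le cauchy_schwarz

lemma eval_bernsteinPolynomial_succ_sub (hx0 : 0 < x) (hx1 : x < 1) (n k : ℕ) :
    (bernsteinPolynomial ℝ n (k + 1)).eval x - (bernsteinPolynomial ℝ n k).eval x =
      -(((k + 1 : ℕ) - (n + 1 : ℕ) * x) * (bernsteinPolynomial ℝ (n + 1) (k + 1)).eval x) /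
        ((n + 1 : ℕ) * x * (1 - x)) := by
  have hv : 0 < (n + 1 : ℕ) * x * (1 - x) := mul_pos (by positivity) (sub_pos.2 hx1)
  have h := congrArg (Polynomial.eval x)
    (X_mul_one_sub_X_mul_derivative_bernsteinPolynomial ℝ (n + 1) (k + 1))
  rw [bernsteinPolynomial.derivative_succ, Nat.add_sub_cancel] at h
  simp only [Polynomial.eval_mul, Polynomial.eval_sub, Polynomial.eval_X, Polynomial.eval_one,
    Polynomial.eval_natCast] at h
  rw [eq_div_iff hv.ne', ← h]
  ring

lemma sum_abs_eval_bernsteinPolynomial_succ_sub_le (hx0 : 0 < x) (hx1 : x < 1) (n : ℕ) :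
    ∑ k ∈ range (n + 1),
        |(bernsteinPolynomial ℝ n (k + 1)).eval x - (bernsteinPolynomial ℝ n k).eval x| ≤
      (√((n + 1 : ℕ) * x * (1 - x)))⁻¹ := by
  have eval_nonneg (k : ℕ) : 0 ≤ (bernsteinPolynomial ℝ (n + 1) k).eval x :=
    eval_bernsteinPolynomial_nonneg hx0.le hx1.le (n + 1) k
  let f (k : ℕ) : ℝ := |k - (n + 1 : ℕ) * x| * (bernsteinPolynomial ℝ (n + 1) k).eval x
  set v : ℝ := (n + 1 : ℕ) * x * (1 - x)
  have hv : 0 < v := mul_pos (by positivity) (sub_pos.2 hx1)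
  calc _ = (∑ k ∈ range (n + 1), f (k + 1)) / v := by
        rw [sum_div]
        refine sum_congr rfl fun k _ => ?_
        rw [eval_bernsteinPolynomial_succ_sub hx0 hx1, abs_div, abs_neg, abs_mul, abs_of_pos hv,
          abs_of_nonneg (eval_nonneg _)]
    _ ≤ (∑ k ∈ range (n + 2), f k) / v := by
        rw [sum_range_succ' f]
        gcongr
        exact le_add_of_nonneg_right (mul_nonneg (abs_nonneg _) (eval_nonneg 0))
    _ ≤ √v / v := by
        gcongr
        exact sum_abs_mul_eval_bernsteinPolynomial_le hx0.le hx1.le (n + 1)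
    _ = (√v)⁻¹ := Real.sqrt_div_self

lemma sum_abs_eval_bernsteinPolynomial_succ_sub_le_mul_rpow (hx0 : 0 < x) (hx1 : x < 1) {n : ℕ}
    (hn : 0 < n) :
    ∑ k ∈ range (n + 1),
        |(bernsteinPolynomial ℝ n (k + 1)).eval x - (bernsteinPolynomial ℝ n k).eval x| ≤
      (√(x * (1 - x)))⁻¹ * (n : ℝ) ^ (-(1 : ℝ) / 2) := by
  have hn' : (0 : ℝ) < n := by exact_mod_cast hn
  have : 0 < 1 - x := sub_pos.2 hx1
  calc _ ≤ (√((n + 1 : ℕ) * x * (1 - x)))⁻¹ :=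
        sum_abs_eval_bernsteinPolynomial_succ_sub_le hx0 hx1 n
    _ ≤ (√(n * (x * (1 - x))))⁻¹ := by
        rw [mul_assoc]
        gcongr
        exact n.le_succ
    _ = (√(x * (1 - x)))⁻¹ * (n : ℝ) ^ (-(1 : ℝ) / 2) := by
        rw [Real.sqrt_mul hn'.le, mul_inv, mul_comm, neg_div, Real.rpow_neg hn'.le,
          ← Real.sqrt_eq_rpow]

end Bernstein

section GeneralizedGcd

/-- The positive integers `d` with `d ^ b ∣ a`, for `a ≠ 0` and `b ≠ 0`; such `d` divide `a`. -/
noncomputable def powDivisors (b : ℕ) (a : ℤ) : Finset ℕ :=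
  {d ∈ a.natAbs.divisors | (d : ℤ) ^ b ∣ a}

variable {b1 b2 : ℕ} {a c : ℤ}

lemma mem_powDivisors (hb1 : b1 ≠ 0) (ha : a ≠ 0) {d : ℕ} :
    d ∈ powDivisors b1 a ↔ (d : ℤ) ^ b1 ∣ a := by
  simp only [powDivisors, mem_filter, Nat.mem_divisors, and_iff_right_iff_imp]
  exact fun h => ⟨Int.natCast_dvd.1 ((dvd_pow_self _ hb1).trans h), Int.natAbs_ne_zero.2 ha⟩

lemma pos_of_mem_powDivisors {b d : ℕ} (h : d ∈ powDivisors b a) : 0 < d :=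
  Nat.pos_of_mem_divisors (mem_filter.1 h).1

lemma natCast_pow_dvd_iff {d b : ℕ} : (d : ℤ) ^ b ∣ a ↔ d ^ b ∣ a.natAbs := by
  rw [← Nat.cast_pow, Int.natCast_dvd]

lemma natCast_lcm_pow_dvd {d e b : ℕ} (hd : (d : ℤ) ^ b ∣ a) (he : (e : ℤ) ^ b ∣ a) :
    ((d.lcm e : ℕ) : ℤ) ^ b ∣ a := by
  rw [natCast_pow_dvd_iff, ← Nat.pow_lcm_pow]
  exact Nat.lcm_dvd (natCast_pow_dvd_iff.1 hd) (natCast_pow_dvd_iff.1 he)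

-- For an unbounded set of common divisors, `gcdb` takes the junk value `sSup _ = 0`.
lemma le_gcdb (h : gcdb b1 b2 a c ≠ 0) {d : ℕ} (hd : 0 < d) (hda : (d : ℤ) ^ b1 ∣ a)
    (hdc : (d : ℤ) ^ b2 ∣ c) : d ≤ gcdb b1 b2 a c :=
  le_csSup (not_imp_comm.1 Nat.sSup_of_not_bddAbove h) ⟨hd, hda, hdc⟩

lemma gcdb_spec (hb1 : b1 ≠ 0) (ha : a ≠ 0) :
    0 < gcdb b1 b2 a c ∧ (gcdb b1 b2 a c : ℤ) ^ b1 ∣ a ∧ (gcdb b1 b2 a c : ℤ) ^ b2 ∣ c := by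
  refine Nat.sSup_mem (s := {d : ℕ | 0 < d ∧ (d : ℤ) ^ b1 ∣ a ∧ (d : ℤ) ^ b2 ∣ c})
    ⟨1, by simp⟩ ⟨a.natAbs, fun d hd => ?_⟩
  exact Nat.divisor_le (mem_filter.1 ((mem_powDivisors hb1 ha).2 hd.2.1)).1

lemma dvd_gcdb_iff (hb1 : b1 ≠ 0) (ha : a ≠ 0) {d : ℕ} :
    d ∣ gcdb b1 b2 a c ↔ (d : ℤ) ^ b1 ∣ a ∧ (d : ℤ) ^ b2 ∣ c := by
  obtain ⟨hG, hGa, hGc⟩ := gcdb_spec (b2 := b2) (c := c) hb1 ha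
  constructor
  · intro hd
    have hd' : (d : ℤ) ∣ gcdb b1 b2 a c := Int.natCast_dvd_natCast.2 hd
    exact ⟨(pow_dvd_pow_of_dvd hd' _).trans hGa, (pow_dvd_pow_of_dvd hd' _).trans hGc⟩
  · rintro ⟨hda, hdc⟩
    have hd : 0 < d := pos_of_mem_powDivisors ((mem_powDivisors hb1 ha).2 hda)
    have lcm_le : d.lcm (gcdb b1 b2 a c) ≤ gcdb b1 b2 a c :=
      le_gcdb hG.ne' (Nat.lcm_pos hd hG) (natCast_lcm_pow_dvd hda hGa) (natCast_lcm_pow_dvd hdc hGc)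
    rw [← lcm_le.antisymm (Nat.le_of_dvd (Nat.lcm_pos hd hG) (Nat.dvd_lcm_right _ _))]
    exact Nat.dvd_lcm_left _ _

lemma filter_powDivisors_eq_divisors_gcdb (hb1 : b1 ≠ 0) (ha : a ≠ 0) :
    {d ∈ powDivisors b1 a | ((d : ℕ) : ℤ) ^ b2 ∣ c} = (gcdb b1 b2 a c).divisors := by
  ext d
  rw [mem_filter, mem_powDivisors hb1 ha, Nat.mem_divisors, dvd_gcdb_iff hb1 ha,
    and_iff_left (gcdb_spec hb1 ha).1.ne']

lemma sum_divisors_moebius (N : ℕ) : ∑ d ∈ N.divisors, μ d = if N = 1 then 1 else 0 := by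
  rw [← ArithmeticFunction.coe_mul_zeta_apply, ArithmeticFunction.moebius_mul_coe_zeta,
    ArithmeticFunction.one_apply]

lemma sum_powDivisors_moebius (hb1 : b1 ≠ 0) (ha : a ≠ 0) :
    ∑ d ∈ powDivisors b1 a, (if (d : ℤ) ^ b2 ∣ c then (μ d : ℝ) else 0) =
      if gcdb b1 b2 a c = 1 then 1 else 0 := by
  rw [← sum_filter, filter_powDivisors_eq_divisors_gcdb hb1 ha]
  exact_mod_cast sum_divisors_moebius _

lemma coprime_of_gcdb_sub_eq_one {n k s s' t t' : ℤ} (h : gcdb b1 b2 (s - s') (t - t') = 1)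
    {d e : ℕ} (hd : 0 < d) (hds : (d : ℤ) ^ b1 ∣ n - s) (hes : (e : ℤ) ^ b1 ∣ n - s')
    (hdt : (d : ℤ) ^ b2 ∣ k - t) (het : (e : ℤ) ^ b2 ∣ k - t') : d.Coprime e := by
  have gcd_pow_dvd {b : ℕ} {x y z : ℤ} (hx : (d : ℤ) ^ b ∣ z - x) (hy : (e : ℤ) ^ b ∣ z - y) :
      ((d.gcd e : ℕ) : ℤ) ^ b ∣ x - y := by
    rw [← sub_sub_sub_cancel_left y x z]
    exact dvd_sub
      ((pow_dvd_pow_of_dvd (Int.natCast_dvd_natCast.2 (d.gcd_dvd_right e)) b).trans hy)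
      ((pow_dvd_pow_of_dvd (Int.natCast_dvd_natCast.2 (d.gcd_dvd_left e)) b).trans hx)
  have gcd_pos : 0 < d.gcd e := Nat.gcd_pos_of_pos_left e hd
  have gcd_le : d.gcd e ≤ 1 :=
    h ▸ le_gcdb (by rw [h]; exact one_ne_zero) gcd_pos (gcd_pow_dvd hds hes) (gcd_pow_dvd hdt het)
  exact gcd_le.antisymm gcd_pos

end GeneralizedGcd

lemma exists_forall_dvd_sub_iff_modEq_prod {ι : Type*} [Fintype ι] {a : ι → ℕ}
    (ha : ∀ i, a i ≠ 0) (hcop : Pairwise fun i j => (a i).Coprime (a j)) (t : ι → ℤ) :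
    ∃ r : ℕ, ∀ k : ℕ, (∀ i, (a i : ℤ) ∣ k - t i) ↔ k ≡ r [MOD ∏ i, a i] := by
  obtain ⟨r, hr⟩ := Nat.chineseRemainderOfFinset (fun i => (t i % a i).toNat) a univ
    (fun i _ => ha i) (hcop.set_pairwise _)
  have dvd_r_sub (i : ι) : (a i : ℤ) ∣ r - t i := by
    have hai : (a i : ℤ) ≠ 0 := Int.natCast_ne_zero.2 (ha i)
    have h := Int.natCast_modEq_iff.2 (hr i (mem_univ i))
    rw [Int.toNat_of_nonneg (Int.emod_nonneg _ hai)] at h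
    exact (h.trans (Int.mod_modEq _ _)).symm.dvd
  refine ⟨r, fun k => ?_⟩
  calc (∀ i, (a i : ℤ) ∣ k - t i) ↔ ∀ i, (a i : ℤ) ∣ k - r :=
        forall_congr' fun i => by rw [← sub_add_sub_cancel _ (r : ℤ), dvd_add_left (dvd_r_sub i)]
    _ ↔ ((∏ i, a i : ℕ) : ℤ) ∣ k - r := by
        rw [Nat.cast_prod]
        exact ⟨Fintype.prod_dvd_of_coprime fun i j hij => Nat.isCoprime_iff_coprime.2 (hcop hij),
          fun h i => (dvd_prod_of_mem _ (mem_univ i)).trans h⟩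
    _ ↔ k ≡ r [MOD ∏ i, a i] := by rw [Nat.ModEq.comm, Nat.modEq_iff_dvd]

section Sieve

variable {b1 b2 J : ℕ}

lemma abs_prod_moebius_le_one {ι : Type*} [Fintype ι] (d : ι → ℕ) :
    |∏ j, (μ (d j) : ℝ)| ≤ 1 := by
  rw [abs_prod]
  exact prod_le_one (fun _ _ => abs_nonneg _) fun j _ => by
    exact_mod_cast ArithmeticFunction.abs_moebius_le_one

lemma sum_filter_gcdb_eq_one (hb1 : b1 ≠ 0) {a : Fin J → ℤ} (ha : ∀ j, a j ≠ 0) (t : Fin J → ℤ)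
    (w : ℕ → ℝ) (K : Finset ℕ) :
    ∑ k ∈ K with ∀ j, gcdb b1 b2 (a j) ((k : ℕ) - t j) = 1, w k =
      ∑ d ∈ Fintype.piFinset fun j => powDivisors b1 (a j),
        (∏ j, (μ (d j) : ℝ)) * ∑ k ∈ K with ∀ j, (d j : ℤ) ^ b2 ∣ (k : ℕ) - t j, w k := by
  have ite_gcdb_eq (k : ℕ) : (if ∀ j, gcdb b1 b2 (a j) (k - t j) = 1 then (1 : ℝ) else 0) =
      ∑ d ∈ Fintype.piFinset fun j => powDivisors b1 (a j),
        if ∀ j, (d j : ℤ) ^ b2 ∣ k - t j then ∏ j, (μ (d j) : ℝ) else 0 := by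
    calc _ = ∏ j, ∑ d ∈ powDivisors b1 (a j), if (d : ℤ) ^ b2 ∣ k - t j then (μ d : ℝ) else 0 := by
          simp only [sum_powDivisors_moebius hb1 (ha _), Fintype.prod_ite_zero, prod_const_one]
      _ = _ := by
          simp only [prod_univ_sum, Fintype.prod_ite_zero]
          exact sum_congr rfl fun _ _ => by congr
  calc _ = ∑ k ∈ K, w k * if ∀ j, gcdb b1 b2 (a j) (k - t j) = 1 then 1 else 0 := by
        simp only [sum_filter, mul_ite, mul_one, mul_zero]
    _ = _ := by
        simp only [ite_gcdb_eq, mul_sum, sum_filter]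
        rw [sum_comm]
        exact sum_congr rfl fun d _ => sum_congr rfl fun k _ => by split_ifs <;> ring

lemma fbs_eq_sum_piFinset (hb1 : b1 ≠ 0) {s : Fin J → ℤ} {n : ℤ} (hs : ∀ j, s j ≠ n) :
    fbs b1 b2 J s n = ∑ d ∈ Fintype.piFinset fun j => powDivisors b1 (n - s j),
      (∏ j, (μ (d j) : ℝ)) *
        if Pairwise fun i j => (d i).Coprime (d j) then (((∏ j, d j ^ b2 : ℕ) : ℝ))⁻¹ else 0 := by
  have ha (j : Fin J) : n - s j ≠ 0 := sub_ne_zero.2 (hs j).symm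
  have mem_iff (d : Fin J → ℕ) : (d ∈ Fintype.piFinset fun j => powDivisors b1 (n - s j)) ↔
      ∀ j, 0 < d j ∧ (d j : ℤ) ^ b1 ∣ n - s j := by
    simp only [Fintype.mem_piFinset, mem_powDivisors hb1 (ha _)]
    refine forall_congr' fun j => (and_iff_right_of_imp fun h => ?_).symm
    exact pos_of_mem_powDivisors ((mem_powDivisors hb1 (ha j)).2 h)
  rw [fbs, tsum_eq_sum fun d hd => if_neg fun h => hd ((mem_iff d).2 h.1)]
  refine sum_congr rfl fun d hd => ?_
  rw [mul_ite, mul_zero, Nat.cast_prod, div_eq_mul_inv, ← prod_pow]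
  simp only [(mem_iff d).1 hd, implies_true, true_and, Nat.cast_pow]
  exact if_congr Iff.rfl rfl rfl

variable {w : ℕ → ℝ} {M : ℕ} {s t : Fin J → ℤ} {n : ℤ}

lemma abs_sum_forall_pow_dvd_sub_le (hw : ∀ k ≥ M, w k = 0)
    (hst : ∀ i j, i ≠ j → gcdb b1 b2 (s i - s j) (t i - t j) = 1)
    {d : Fin J → ℕ} (hd : ∀ j, 0 < d j) (hds : ∀ j, (d j : ℤ) ^ b1 ∣ n - s j) :
    |∑ k ∈ range M with ∀ j, (d j : ℤ) ^ b2 ∣ (k : ℕ) - t j, w k - (∑ k ∈ range M, w k) *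
        if Pairwise fun i j => (d i).Coprime (d j) then (((∏ j, d j ^ b2 : ℕ) : ℝ))⁻¹ else 0|
      ≤ ∑ k ∈ range M, |w (k + 1) - w k| := by
  have hpos (j : Fin J) : 0 < d j ^ b2 := pow_pos (hd j) b2
  split_ifs with hcop
  · obtain ⟨r, hr⟩ := exists_forall_dvd_sub_iff_modEq_prod (fun j => (hpos j).ne')
      (fun i j hij => (hcop hij).pow b2 b2) t
    simp only [Nat.cast_pow] at hr
    simp only [hr, ← div_eq_mul_inv]
    exact abs_sum_modEq_sub_le hw (prod_pos fun j _ => hpos j) r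
  · have not_forall_dvd (k : ℕ) : ¬ ∀ j, (d j : ℤ) ^ b2 ∣ k - t j := fun hk =>
      hcop fun i j hij => coprime_of_gcdb_sub_eq_one (hst i j hij) (hd i) (hds i) (hds j)
        (hk i) (hk j)
    simp only [not_forall_dvd, filter_false, sum_empty, mul_zero, sub_zero, abs_zero]
    positivity

theorem abs_sum_filter_gcdb_sub_mul_fbs_le (hb1 : b1 ≠ 0) (hw : ∀ k ≥ M, w k = 0)
    (hst : ∀ i j, i ≠ j → gcdb b1 b2 (s i - s j) (t i - t j) = 1) (hs : ∀ j, s j ≠ n) :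
    |∑ k ∈ range M with ∀ j, gcdb b1 b2 (n - s j) ((k : ℕ) - t j) = 1, w k -
        (∑ k ∈ range M, w k) * fbs b1 b2 J s n|
      ≤ (∏ j, #(n - s j).natAbs.divisors : ℝ) * ∑ k ∈ range M, |w (k + 1) - w k| := by
  have ha (j : Fin J) : n - s j ≠ 0 := sub_ne_zero.2 (hs j).symm
  rw [sum_filter_gcdb_eq_one hb1 ha, fbs_eq_sum_piFinset hb1 hs, mul_sum, ← sum_sub_distrib]
  calc _ ≤ ∑ _d ∈ Fintype.piFinset fun j => powDivisors b1 (n - s j),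
        ∑ k ∈ range M, |w (k + 1) - w k| := by
        refine (abs_sum_le_sum_abs _ _).trans (sum_le_sum fun _ hd => ?_)
        rw [Fintype.mem_piFinset] at hd
        rw [mul_left_comm, ← mul_sub, abs_mul]
        refine (mul_le_of_le_one_left (abs_nonneg _) (abs_prod_moebius_le_one _)).trans ?_
        exact abs_sum_forall_pow_dvd_sub_le hw hst
          (fun j => pos_of_mem_powDivisors (hd j))
          fun j => (mem_powDivisors hb1 (ha j)).1 (hd j)
    _ ≤ _ := by
        rw [sum_const, nsmul_eq_mul, Fintype.card_piFinset, Nat.cast_prod]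
        gcongr
        exact filter_subset _ _

end Sieve

theorem stmt_16_general (J : ℕ) {α : ℝ} (hα0 : 0 < α) (hα1 : α < 1) {ε : ℝ} (hε : 0 < ε) :
    ∃ C > 0, ∀ b1 b2 : ℕ, 0 < b1 → ∀ (m : ℕ), 1 ≤ m → ∀ (X n : ℤ) (s t : Fin J → ℤ),
      (∀ j1 j2, j1 ≠ j2 → gcdb b1 b2 (s j1 - s j2) (t j1 - t j2) = 1) →
      0 < X → |n| ≤ X → (∀ j, s j ≠ n ∧ |s j| ≤ X) →
      |(∑ k ∈ (range (m + 1)).filter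
            (fun k : ℕ => ∀ j, gcdb b1 b2 (n - s j) ((k : ℤ) - t j) = 1),
          (m.choose k : ℝ) * α ^ k * (1 - α) ^ (m - k)) - fbs b1 b2 J s n|
        ≤ C * (X : ℝ) ^ ε * (m : ℝ) ^ (-(1 : ℝ) / 2) := by
  have : 0 < 1 - α := sub_pos.2 hα1
  obtain ⟨C, hC, hdiv⟩ := exists_forall_prod_card_divisors_le_mul_rpow (Fin J) hε
  refine ⟨C * 2 ^ ε * (√(α * (1 - α)))⁻¹, by positivity,
    fun b1 b2 hb1 m hm X n s t hst hX hn hs => ?_⟩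
  have hX' : (1 : ℝ) ≤ X := by exact_mod_cast hX
  have prod_le : (∏ j, #(n - s j).natAbs.divisors : ℝ) ≤ C * (2 * (X : ℝ)) ^ ε := by
    refine hdiv _ (by linarith) _ fun j => ?_
    rw [Nat.cast_natAbs]
    exact_mod_cast (by grind : |n - s j| ≤ 2 * X)
  have error_le := abs_sum_filter_gcdb_sub_mul_fbs_le (b2 := b2) (t := t)
    (w := fun k => (bernsteinPolynomial ℝ m k).eval α) (M := m + 1) hb1.ne'
    (fun k hk => by rw [bernsteinPolynomial.eq_zero_of_lt ℝ hk, Polynomial.eval_zero])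
    hst fun j => (hs j).1
  rw [sum_eval_bernsteinPolynomial, one_mul] at error_le
  have variation_le := sum_abs_eval_bernsteinPolynomial_succ_sub_le_mul_rpow hα0 hα1 hm
  simp only [← eval_bernsteinPolynomial]
  calc _ ≤ _ := error_le
    _ ≤ C * (2 * (X : ℝ)) ^ ε * ((√(α * (1 - α)))⁻¹ * (m : ℝ) ^ (-(1 : ℝ) / 2)) := by
        gcongr
    _ = _ := by
        rw [Real.mul_rpow (by norm_num) (by linarith)]
        ring

theorem stmt_16 (b1 b2 J : ℕ) (hb1 : 0 < b1) (hb2 : 0 < b2) (hJ : 1 ≤ J)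
    (α : ℝ) (hα0 : 0 < α) (hα1 : α < 1) (ε : ℝ) (hε : 0 < ε) :
    ∃ C > 0, ∀ (m : ℕ), 1 ≤ m → ∀ (n : ℤ) (s t : Fin J → ℤ),
      (∀ j1 j2, j1 ≠ j2 → gcdb b1 b2 (s j1 - s j2) (t j1 - t j2) = 1) →
      (∀ j, |s j| < n) →
      |(∑ k ∈ (range (m + 1)).filter
            (fun k : ℕ => ∀ j, gcdb b1 b2 (n - s j) ((k : ℤ) - t j) = 1),
          (m.choose k : ℝ) * α ^ k * (1 - α) ^ (m - k)) - fbs b1 b2 J s n|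
        ≤ C * (n : ℝ) ^ ε * (m : ℝ) ^ (-(1 : ℝ) / 2) := by
  obtain ⟨C, hC, bound⟩ := stmt_16_general J hα0 hα1 hε
  refine ⟨C, hC, fun m hm n s t hst hs => ?_⟩
  have hn : 0 < n := (abs_nonneg _).trans_lt (hs ⟨0, hJ⟩)
  exact bound b1 b2 hb1 m hm n n s t hst hn (abs_of_pos hn).le fun j =>
    ⟨((le_abs_self _).trans_lt (hs j)).ne, (hs j).le⟩
end
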